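/- arXiv:math/0406242 — 8 statements merged into one kernel-verified Lean document; each statement's English description precedes it below -/
import Mathlib

section
/- Let M be an element of SL₂(ℤ) with trace(M) > 2 (equivalently, M has two distinct eigenvalues in ℝ₊*). Then there exist an integer n ≥ 1, positive integers a₁, b₁, …, aₙ, bₙ, and A ∈ SL₂(ℤ) such that A·M·A⁻¹ = R^{a₁}·L^{b₁}·R^{a₂}·L^{b₂}·⋯·R^{aₙ}·L^{bₙ}. -/
/-- The standard transvection matrix `R = [[1,1],[0,1]]` in `SL₂(ℤ)`. -/
def Rmat : Matrix.SpecialLinearGroup (Fin 2) ℤ :=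
  ⟨!![1, 1; 0, 1], by simp [Matrix.det_fin_two_of]⟩

/-- The standard transvection matrix `L = [[1,0],[1,1]]` in `SL₂(ℤ)`. -/
def Lmat : Matrix.SpecialLinearGroup (Fin 2) ℤ :=
  ⟨!![1, 0; 1, 1], by simp [Matrix.det_fin_two_of]⟩

/-!
Among the conjugates `[[a, b], [c, d]]` of `M`, take one for which `|a - d|` is minimal. Here
`bc ≠ 0`, since `bc = 0` would give `ad = 1` and hence trace `±2`. Conjugating by `R^{±1}` changes
`a - d` by `±2c`, and conjugating by `L^{±1}` changes it by `∓2b`, so minimality gives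
`|a - d| ≤ |b|` and `|a - d| ≤ |c|`. As `(a - d)² + 4bc = tr(M)² - 4 > 0`, this forces `bc > 0`;
then all entries are positive, possibly after conjugating by `S = [[0, -1], [1, 0]]`. By Euclid's
algorithm on the rows, a matrix with nonnegative entries is a product of `R`s and `L`s, and a word
in which both letters occur can be rotated until it starts with `R` and ends with `L`.
-/

section Words

variable {G : Type*}

/-- The products `x ^ a₁ * y ^ b₁ * ⋯ * x ^ aₙ * y ^ bₙ` with `n ≥ 1` and all exponents positive,
that is, the nonempty words in `x` and `y` that start with `x` and end with `y`. -/
def blockSemigroup [Monoid G] (x y : G) : Subsemigroup G :=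
  Subsemigroup.closure {w | ∃ a b : ℕ, 0 < a ∧ 0 < b ∧ x ^ a * y ^ b = w}

section Monoid

variable [Monoid G] {x y w : G}

theorem pow_mul_pow_mem_blockSemigroup {a b : ℕ} (ha : 0 < a) (hb : 0 < b) :
    x ^ a * y ^ b ∈ blockSemigroup x y :=
  Subsemigroup.subset_closure ⟨a, b, ha, hb, rfl⟩

theorem pow_mul_mem_blockSemigroup (k : ℕ) (hw : w ∈ blockSemigroup x y) :
    x ^ k * w ∈ blockSemigroup x y := by
  induction hw using Subsemigroup.closure_induction with
  | mem w hw =>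
    obtain ⟨a, b, ha, hb, rfl⟩ := hw
    rw [← mul_assoc, ← pow_add]
    exact pow_mul_pow_mem_blockSemigroup (Nat.add_pos_right k ha) hb
  | mul u v _ hv hu _ =>
    rw [← mul_assoc]
    exact mul_mem hu hv

theorem mul_pow_mem_blockSemigroup (k : ℕ) (hw : w ∈ blockSemigroup x y) :
    w * y ^ k ∈ blockSemigroup x y := by
  induction hw using Subsemigroup.closure_induction with
  | mem w hw =>
    obtain ⟨a, b, ha, hb, rfl⟩ := hw
    rw [mul_assoc, ← pow_add]
    exact pow_mul_pow_mem_blockSemigroup ha (Nat.add_pos_left hb k)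
  | mul u v hu _ _ hv =>
    rw [mul_assoc]
    exact mul_mem hu hv

theorem exists_list_of_mem_blockSemigroup (hw : w ∈ blockSemigroup x y) :
    ∃ l : List (ℕ × ℕ), l ≠ [] ∧ (∀ p ∈ l, 0 < p.1 ∧ 0 < p.2) ∧
      w = (l.map fun p => x ^ p.1 * y ^ p.2).prod := by
  induction hw using Subsemigroup.closure_induction with
  | mem w hw =>
    obtain ⟨a, b, ha, hb, rfl⟩ := hw
    exact ⟨[(a, b)], by simp, by simp [ha, hb], by simp⟩
  | mul u v _ _ hu hv =>
    obtain ⟨lu, hlu, hpos_u, rfl⟩ := hu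
    obtain ⟨lv, -, hpos_v, rfl⟩ := hv
    refine ⟨lu ++ lv, List.append_ne_nil_of_left_ne_nil hlu lv, fun p hp => ?_, by simp⟩
    exact (List.mem_append.1 hp).elim (hpos_u p) (hpos_v p)

theorem exists_ofFn_of_mem_blockSemigroup (hw : w ∈ blockSemigroup x y) :
    ∃ n : ℕ, 1 ≤ n ∧ ∃ a b : Fin n → ℕ, (∀ i, 0 < a i) ∧ (∀ i, 0 < b i) ∧
      w = (List.ofFn fun i => x ^ a i * y ^ b i).prod := by
  obtain ⟨l, hl, hpos, rfl⟩ := exists_list_of_mem_blockSemigroup hw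
  refine ⟨l.length, List.length_pos_iff.2 hl, fun i => (l.get i).1, fun i => (l.get i).2,
    fun i => (hpos _ (l.get_mem i)).1, fun i => (hpos _ (l.get_mem i)).2, ?_⟩
  conv_lhs => rw [← List.ofFn_get l, List.map_ofFn]
  rfl

theorem exists_eq_pow_mul_mul_pow_of_mem_closure_pair (hw : w ∈ Submonoid.closure {x, y}) :
    ∃ j k : ℕ, w = y ^ j * x ^ k ∨ ∃ u ∈ blockSemigroup x y, w = y ^ j * u * x ^ k := by
  induction hw using Submonoid.closure_induction_left with
  | one => exact ⟨0, 0, Or.inl (by simp)⟩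
  | mul_left z hz w _ ih =>
    obtain ⟨j, k, hw⟩ := ih
    rcases hz with rfl | rfl
    · rcases j.eq_zero_or_pos with rfl | hj
      · rcases hw with rfl | ⟨u, hu, rfl⟩
        · exact ⟨0, k + 1, Or.inl (by simp [pow_succ'])⟩
        · exact ⟨0, k, Or.inr ⟨z ^ 1 * u, pow_mul_mem_blockSemigroup 1 hu, by simp [mul_assoc]⟩⟩
      · have hblock : z ^ 1 * y ^ j ∈ blockSemigroup z y :=
          pow_mul_pow_mem_blockSemigroup one_pos hj
        rcases hw with rfl | ⟨u, hu, rfl⟩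
        · exact ⟨0, k, Or.inr ⟨_, hblock, by simp [mul_assoc]⟩⟩
        · exact ⟨0, k, Or.inr ⟨_, mul_mem hblock hu, by simp [mul_assoc]⟩⟩
    · rcases hw with rfl | ⟨u, hu, rfl⟩
      · exact ⟨j + 1, k, Or.inl (by simp [pow_succ', mul_assoc])⟩
      · exact ⟨j + 1, k, Or.inr ⟨u, hu, by simp [pow_succ', mul_assoc]⟩⟩

end Monoid

section Group

variable [Group G] {x y w : G}

theorem isConj_mul_comm (g h : G) : IsConj (g * h) (h * g) :=
  isConj_iff.2 ⟨h, by group⟩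

theorem exists_isConj_mem_blockSemigroup_of_pow_mul_mul_pow (j k : ℕ)
    (hw : w ∈ blockSemigroup x y) :
    ∃ u ∈ blockSemigroup x y, IsConj (y ^ j * w * x ^ k) u := by
  rcases k.eq_zero_or_pos with rfl | hk
  · refine ⟨w * y ^ j, mul_pow_mem_blockSemigroup j hw, ?_⟩
    simpa using isConj_mul_comm (y ^ j) w
  · refine ⟨x ^ k * (y ^ j * w), ?_, isConj_mul_comm _ _⟩
    rcases j.eq_zero_or_pos with rfl | hj
    · simpa using pow_mul_mem_blockSemigroup k hw
    · rw [← mul_assoc]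
      exact mul_mem (pow_mul_pow_mem_blockSemigroup hk hj) hw

theorem eq_pow_or_exists_isConj_mem_blockSemigroup (hw : w ∈ Submonoid.closure {x, y}) :
    (∃ k : ℕ, w = x ^ k) ∨ (∃ k : ℕ, w = y ^ k) ∨ ∃ u ∈ blockSemigroup x y, IsConj w u := by
  obtain ⟨j, k, rfl | ⟨u, hu, rfl⟩⟩ := exists_eq_pow_mul_mul_pow_of_mem_closure_pair hw
  · rcases j.eq_zero_or_pos with rfl | hj
    · exact Or.inl ⟨k, by simp⟩
    rcases k.eq_zero_or_pos with rfl | hk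
    · exact Or.inr (Or.inl ⟨j, by simp⟩)
    exact Or.inr (Or.inr ⟨_, pow_mul_pow_mem_blockSemigroup hk hj, isConj_mul_comm _ _⟩)
  · exact Or.inr (Or.inr (exists_isConj_mem_blockSemigroup_of_pow_mul_mul_pow j k hu))

end Group

end Words

section Matrices

open Matrix ModularGroup

theorem trace_eq_of_isConj {n R : Type*} [Fintype n] [DecidableEq n] [CommRing R]
    {M N : SpecialLinearGroup n R} (h : IsConj M N) :
    trace (M : Matrix n n R) = trace (N : Matrix n n R) := by
  obtain ⟨A, hA⟩ := isConj_iff.1 h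
  rw [← hA, Matrix.SpecialLinearGroup.coe_mul, trace_mul_comm, ← Matrix.SpecialLinearGroup.coe_mul,
    inv_mul_cancel_left]

theorem mul_sub_mul_eq_one {R : Type*} [CommRing R] (M : SpecialLinearGroup (Fin 2) R) :
    M 0 0 * M 1 1 - M 0 1 * M 1 0 = 1 := by
  rw [← det_fin_two, M.det_coe]

theorem coe_Rmat : (Rmat : Matrix (Fin 2) (Fin 2) ℤ) = !![1, 1; 0, 1] := rfl

theorem coe_Lmat : (Lmat : Matrix (Fin 2) (Fin 2) ℤ) = !![1, 0; 1, 1] := rfl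

theorem Rmat_pow_apply_one_zero (k : ℕ) : (Rmat ^ k) 1 0 = 0 := by
  induction k with
  | zero => simp
  | succ k ih => simp_all [pow_succ, mul_apply, coe_Rmat]

theorem Lmat_pow_apply_zero_one (k : ℕ) : (Lmat ^ k) 0 1 = 0 := by
  induction k with
  | zero => simp
  | succ k ih => simp_all [pow_succ, mul_apply, coe_Lmat]

theorem Rmat_inv_mul_apply_zero (M : SpecialLinearGroup (Fin 2) ℤ) (j : Fin 2) :
    (Rmat⁻¹ * M) 0 j = M 0 j - M 1 j := by
  simp [coe_Rmat, mul_apply, adjugate_fin_two, sub_eq_add_neg]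

theorem Rmat_inv_mul_apply_one (M : SpecialLinearGroup (Fin 2) ℤ) (j : Fin 2) :
    (Rmat⁻¹ * M) 1 j = M 1 j := by
  simp [coe_Rmat, mul_apply, adjugate_fin_two]

theorem Lmat_inv_mul_apply_zero (M : SpecialLinearGroup (Fin 2) ℤ) (j : Fin 2) :
    (Lmat⁻¹ * M) 0 j = M 0 j := by
  simp [coe_Lmat, mul_apply, adjugate_fin_two]

theorem Lmat_inv_mul_apply_one (M : SpecialLinearGroup (Fin 2) ℤ) (j : Fin 2) :
    (Lmat⁻¹ * M) 1 j = M 1 j - M 0 j := by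
  simp [coe_Lmat, mul_apply, adjugate_fin_two, sub_eq_neg_add]

section Euclid

variable {M : SpecialLinearGroup (Fin 2) ℤ}

theorem eq_one_or_row_le_row (hM : ∀ i j, 0 ≤ M i j) :
    M = 1 ∨ (∀ j, M 1 j ≤ M 0 j) ∨ ∀ j, M 0 j ≤ M 1 j := by
  have hdet := mul_sub_mul_eq_one M
  have h00 := hM 0 0
  have h01 := hM 0 1
  have h10 := hM 1 0
  have h11 := hM 1 1
  simp only [Fin.forall_fin_two]
  by_cases hdiag : M 1 0 < M 0 0 ∧ M 0 1 < M 1 1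
  · have hprod : (M 1 0 + 1) * (M 0 1 + 1) ≤ M 0 0 * M 1 1 :=
      mul_le_mul hdiag.1 hdiag.2 (by omega) h00
    have hb : M 0 1 = 0 := by linarith
    have hc : M 1 0 = 0 := by linarith
    have had : M 0 0 * M 1 1 = 1 := by simpa [hb] using hdet
    have ha : M 0 0 = 1 := Int.eq_one_of_mul_eq_one_right h00 had
    have hd : M 1 1 = 1 := Int.eq_one_of_mul_eq_one_left h11 had
    left
    ext i j
    fin_cases i <;> fin_cases j <;> simp [ha, hb, hc, hd]
  · have hanti : ¬(M 0 0 < M 1 0 ∧ M 1 1 < M 0 1) := by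
      rintro ⟨hac, hdb⟩
      have hprod : M 1 1 * M 0 0 ≤ M 0 1 * M 1 0 := mul_le_mul hdb.le hac.le h00 h01
      linarith
    right
    omega

theorem mem_closure_Rmat_Lmat_of_nonneg (hM : ∀ i j, 0 ≤ M i j) :
    M ∈ Submonoid.closure {Rmat, Lmat} := by
  induction hn : (M 0 0 + M 0 1 + M 1 0 + M 1 1).toNat using Nat.strong_induction_on
    generalizing M with
  | _ n ih =>
  subst hn
  have hdet := mul_sub_mul_eq_one M
  have hpos := hM
  simp only [Fin.forall_fin_two] at hpos
  obtain ⟨⟨h00, h01⟩, h10, h11⟩ := hpos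
  rcases eq_one_or_row_le_row hM with rfl | hrow | hrow
  · exact one_mem _
  · have hbottom : M 1 0 ≠ 0 ∨ M 1 1 ≠ 0 := by
      by_contra! h
      simp [h.1, h.2] at hdet
    rw [← mul_inv_cancel_left Rmat M]
    refine mul_mem (Submonoid.subset_closure (by simp)) (ih _ ?_ ?_ rfl)
    · simp only [Rmat_inv_mul_apply_zero, Rmat_inv_mul_apply_one]
      omega
    · simp only [Fin.forall_fin_two, Rmat_inv_mul_apply_zero, Rmat_inv_mul_apply_one] at hrow ⊢
      omega
  · have htop : M 0 0 ≠ 0 ∨ M 0 1 ≠ 0 := by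
      by_contra! h
      simp [h.1, h.2] at hdet
    rw [← mul_inv_cancel_left Lmat M]
    refine mul_mem (Submonoid.subset_closure (by simp)) (ih _ ?_ ?_ rfl)
    · simp only [Lmat_inv_mul_apply_zero, Lmat_inv_mul_apply_one]
      omega
    · simp only [Fin.forall_fin_two, Lmat_inv_mul_apply_zero, Lmat_inv_mul_apply_one] at hrow ⊢
      omega

end Euclid

section Reduction

/-- The difference `a - d` of the diagonal entries of `[[a, b], [c, d]]`, whose absolute value is
minimized over the conjugacy class. -/
def diagGap {R : Type*} [CommRing R] (M : SpecialLinearGroup (Fin 2) R) : R :=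
  M 0 0 - M 1 1

theorem diagGap_sq_add_eq_trace_sq_sub {R : Type*} [CommRing R] (M : SpecialLinearGroup (Fin 2) R) :
    diagGap M ^ 2 + 4 * (M 0 1 * M 1 0) = trace (M : Matrix (Fin 2) (Fin 2) R) ^ 2 - 4 := by
  rw [diagGap, trace_fin_two]
  linear_combination (-4) * mul_sub_mul_eq_one M

theorem diagGap_conj {R : Type*} [CommRing R] (A M : SpecialLinearGroup (Fin 2) R) :
    diagGap (A * M * A⁻¹) = (A 0 0 * A 1 1 + A 0 1 * A 1 0) * diagGap M +
      2 * (A 0 1 * A 1 1 * M 1 0 - A 0 0 * A 1 0 * M 0 1) := by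
  simp only [diagGap, Matrix.SpecialLinearGroup.coe_mul, Matrix.SpecialLinearGroup.coe_inv,
    adjugate_fin_two, mul_apply, Fin.sum_univ_two, of_apply, cons_val', cons_val_zero, cons_val_one,
    cons_val_fin_one]
  ring

theorem diagGap_Rmat_conj (M : SpecialLinearGroup (Fin 2) ℤ) :
    diagGap (Rmat * M * Rmat⁻¹) = diagGap M + 2 * M 1 0 := by
  rw [diagGap_conj]
  simp [coe_Rmat]

theorem diagGap_Rmat_inv_conj (M : SpecialLinearGroup (Fin 2) ℤ) :
    diagGap (Rmat⁻¹ * M * Rmat⁻¹⁻¹) = diagGap M - 2 * M 1 0 := by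
  rw [diagGap_conj]
  simp [coe_Rmat, adjugate_fin_two, sub_eq_add_neg]

theorem diagGap_Lmat_conj (M : SpecialLinearGroup (Fin 2) ℤ) :
    diagGap (Lmat * M * Lmat⁻¹) = diagGap M - 2 * M 0 1 := by
  rw [diagGap_conj]
  simp [coe_Lmat, sub_eq_add_neg]

theorem diagGap_Lmat_inv_conj (M : SpecialLinearGroup (Fin 2) ℤ) :
    diagGap (Lmat⁻¹ * M * Lmat⁻¹⁻¹) = diagGap M + 2 * M 0 1 := by
  rw [diagGap_conj]
  simp [coe_Lmat, adjugate_fin_two]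

theorem exists_isConj_abs_diagGap_minimal (M : SpecialLinearGroup (Fin 2) ℤ) :
    ∃ N, IsConj M N ∧ ∀ A, |diagGap N| ≤ |diagGap (A * N * A⁻¹)| := by
  obtain ⟨N, hMN, hmin⟩ := exists_minimalFor_of_wellFoundedLT (IsConj M)
    (fun N => (diagGap N).natAbs) ⟨M, IsConj.refl M⟩
  refine ⟨N, hMN, fun A => ?_⟩
  have hle : (diagGap N).natAbs ≤ (diagGap (A * N * A⁻¹)).natAbs :=
    not_lt.1 fun hlt => hlt.not_ge (hmin (hMN.trans (isConj_iff.2 ⟨A, rfl⟩)) hlt.le)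
  simpa only [Int.abs_eq_natAbs, Nat.cast_le] using hle

theorem abs_le_abs_of_abs_le_abs_add_two_mul {R : Type*} [CommRing R] [LinearOrder R]
    [IsStrictOrderedRing R] {t s : R} (hs : s ≠ 0) (hadd : |t| ≤ |t + 2 * s|)
    (hsub : |t| ≤ |t - 2 * s|) : |t| ≤ |s| := by
  grind

variable {M : SpecialLinearGroup (Fin 2) ℤ}

theorem mul_offDiag_ne_zero_of_two_lt_trace
    (htr : 2 < trace (M : Matrix (Fin 2) (Fin 2) ℤ)) : M 0 1 * M 1 0 ≠ 0 := by
  intro hoff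
  have had : M 0 0 * M 1 1 = 1 := by linarith [mul_sub_mul_eq_one M]
  rw [trace_fin_two] at htr
  rcases Int.eq_one_or_neg_one_of_mul_eq_one' had with ⟨ha, hd⟩ | ⟨ha, hd⟩ <;> omega

theorem mul_offDiag_pos_of_minimal (htr : 2 < trace (M : Matrix (Fin 2) (Fin 2) ℤ))
    (hmin : ∀ A, |diagGap M| ≤ |diagGap (A * M * A⁻¹)|) : 0 < M 0 1 * M 1 0 := by
  have hne := mul_offDiag_ne_zero_of_two_lt_trace htr
  have hb : |diagGap M| ≤ |M 0 1| :=
    abs_le_abs_of_abs_le_abs_add_two_mul (left_ne_zero_of_mul hne)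
      (by simpa only [diagGap_Lmat_inv_conj] using hmin Lmat⁻¹)
      (by simpa only [diagGap_Lmat_conj] using hmin Lmat)
  have hc : |diagGap M| ≤ |M 1 0| :=
    abs_le_abs_of_abs_le_abs_add_two_mul (right_ne_zero_of_mul hne)
      (by simpa only [diagGap_Rmat_conj] using hmin Rmat)
      (by simpa only [diagGap_Rmat_inv_conj] using hmin Rmat⁻¹)
  have hsq : diagGap M ^ 2 ≤ |M 0 1 * M 1 0| := by
    rw [← sq_abs, sq, abs_mul]
    exact mul_le_mul hb hc (abs_nonneg _) (abs_nonneg _)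
  have hdisc : 0 < diagGap M ^ 2 + 4 * (M 0 1 * M 1 0) := by
    rw [diagGap_sq_add_eq_trace_sq_sub]
    nlinarith
  by_contra! hoff
  rw [abs_of_nonpos hoff] at hsq
  linarith [sq_nonneg (diagGap M)]

theorem diag_pos_of_mul_offDiag_pos {R : Type*} [CommRing R] [LinearOrder R] [IsStrictOrderedRing R]
    {M : SpecialLinearGroup (Fin 2) R} (htr : 0 < trace (M : Matrix (Fin 2) (Fin 2) R))
    (hoff : 0 < M 0 1 * M 1 0) : 0 < M 0 0 ∧ 0 < M 1 1 := by
  have had : 0 < M 0 0 * M 1 1 := by linarith [mul_sub_mul_eq_one M]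
  rw [trace_fin_two] at htr
  exact (mul_pos_iff.1 had).resolve_right fun h => by linarith

theorem coe_S_conj (M : SpecialLinearGroup (Fin 2) ℤ) :
    ((S * M * S⁻¹ : SpecialLinearGroup (Fin 2) ℤ) : Matrix (Fin 2) (Fin 2) ℤ) =
      !![M 1 1, -M 1 0; -M 0 1, M 0 0] := by
  ext i j
  fin_cases i <;> fin_cases j <;> simp [coe_S, mul_apply, vecMul_eq_sum, adjugate_fin_two]

theorem exists_isConj_pos_of_mul_offDiag_pos (htr : 0 < trace (M : Matrix (Fin 2) (Fin 2) ℤ))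
    (hoff : 0 < M 0 1 * M 1 0) : ∃ N, IsConj M N ∧ ∀ i j, 0 < N i j := by
  obtain ⟨ha, hd⟩ := diag_pos_of_mul_offDiag_pos htr hoff
  rcases mul_pos_iff.1 hoff with ⟨hb, hc⟩ | ⟨hb, hc⟩
  · exact ⟨M, IsConj.refl M, by simp [Fin.forall_fin_two, ha, hb, hc, hd]⟩
  · refine ⟨S * M * S⁻¹, isConj_iff.2 ⟨S, rfl⟩, ?_⟩
    simp only [Fin.forall_fin_two, coe_S_conj]
    simp [ha, hb, hc, hd]

theorem exists_isConj_pos_of_two_lt_trace (htr : 2 < trace (M : Matrix (Fin 2) (Fin 2) ℤ)) :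
    ∃ N, IsConj M N ∧ ∀ i j, 0 < N i j := by
  obtain ⟨M', hMM', hmin⟩ := exists_isConj_abs_diagGap_minimal M
  rw [trace_eq_of_isConj hMM'] at htr
  obtain ⟨N, hM'N, hN⟩ := exists_isConj_pos_of_mul_offDiag_pos (two_pos.trans htr)
    (mul_offDiag_pos_of_minimal htr hmin)
  exact ⟨N, hMM'.trans hM'N, hN⟩

end Reduction

theorem exists_isConj_mem_blockSemigroup_of_pos {M : SpecialLinearGroup (Fin 2) ℤ}
    (hM : ∀ i j, 0 < M i j) : ∃ N ∈ blockSemigroup Rmat Lmat, IsConj M N := by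
  have hword := mem_closure_Rmat_Lmat_of_nonneg fun i j => (hM i j).le
  rcases eq_pow_or_exists_isConj_mem_blockSemigroup hword with ⟨k, rfl⟩ | ⟨k, rfl⟩ | hconj
  · exact absurd (Rmat_pow_apply_one_zero k) (hM 1 0).ne'
  · exact absurd (Lmat_pow_apply_zero_one k) (hM 0 1).ne'
  · exact hconj

end Matrices

/-- Any element of `SL₂(ℤ)` with trace `> 2` is conjugate to a product
`R^{a₁} L^{b₁} ⋯ R^{aₙ} L^{bₙ}` with `n ≥ 1` and all `aᵢ, bᵢ` positive. -/
theorem conjugate_to_positive_word (M : Matrix.SpecialLinearGroup (Fin 2) ℤ)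
    (hM : 2 < Matrix.trace (M : Matrix (Fin 2) (Fin 2) ℤ)) :
    ∃ (n : ℕ), 1 ≤ n ∧ ∃ (a b : Fin n → ℕ),
      (∀ i, 0 < a i) ∧ (∀ i, 0 < b i) ∧
      ∃ A : Matrix.SpecialLinearGroup (Fin 2) ℤ,
        A * M * A⁻¹ = (List.ofFn fun i : Fin n => Rmat ^ a i * Lmat ^ b i).prod := by
  obtain ⟨N, hMN, hN⟩ := exists_isConj_pos_of_two_lt_trace hM
  obtain ⟨W, hW, hNW⟩ := exists_isConj_mem_blockSemigroup_of_pos hN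
  obtain ⟨n, hn, a, b, ha, hb, rfl⟩ := exists_ofFn_of_mem_blockSemigroup hW
  exact ⟨n, hn, a, b, ha, hb, isConj_iff.1 (hMN.trans hNW)⟩
end

section
/- Suppose n, p ≥ 1 and a₁,b₁,…,aₙ,bₙ and c₁,d₁,…,c_p,d_p are positive integers such that the products R^{a₁}L^{b₁}⋯R^{aₙ}L^{bₙ} and R^{c₁}L^{d₁}⋯R^{c_p}L^{d_p} are conjugate in SL₂(ℤ). Then n = p and the two sequences of pairs agree up to cyclic permutation: there exists k ∈ ℤ/nℤ such that a_i = c_{i+k} and b_i = d_{i+k} for all i ∈ ℤ/nℤ (indices taken modulo n). -/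
/-!
Let `A * M = M' * A` with `M` and `M'` positive words. Every nonzero integer vector is eventually
moved by the powers of a positive matrix of `SL₂(ℤ)` into the open first or third quadrant, because
the inverse matrix strictly expands the `ℓ¹` norm outside these quadrants. Applied to the rows and
columns of `A * M ^ k = M' ^ k * A`, this replaces `A` by a positive matrix `B`, up to sign.
The matrices of `SL₂(ℤ)` with nonnegative entries form the free monoid on `R` and `L`, so
`B * M = M' * B` is an equation between words. The word of `B * M` starts with `R`, as `M'` does,
and ends with `L`, as `M` does, hence it is a product of blocks `R ^ a * L ^ b`. The equation
`(B * M) * M = M' * (B * M)` then reads `V ++ X = Y ++ V` in the free monoid on blocks, and this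
forces `X` and `Y` to be cyclic permutations of each other.
-/

namespace PositiveWord

open Matrix Filter
open scoped MatrixGroups

section Positive

theorem mul_apply_pos {l m n R : Type*} [Fintype m] [Nonempty m] [Semiring R] [PartialOrder R]
    [IsStrictOrderedRing R] {M : Matrix l m R} {N : Matrix m n R} (hM : ∀ i j, 0 < M i j)
    (hN : ∀ i j, 0 < N i j) (i : l) (j : n) : 0 < (M * N) i j :=
  Finset.sum_pos (fun k _ => mul_pos (hM i k) (hN k j)) Finset.univ_nonempty

section OrderedRing

variable {R : Type*} [CommRing R] [LinearOrder R] [IsStrictOrderedRing R]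

theorem mulVec_same_sign {M : Matrix (Fin 2) (Fin 2) R} {v : Fin 2 → R} (hM : ∀ i j, 0 < M i j)
    (hv : 0 < v 0 * v 1) : 0 < (M *ᵥ v) 0 * (M *ᵥ v) 1 := by
  have := hM 0 0
  have := hM 0 1
  have := hM 1 0
  have := hM 1 1
  calc 0 < M 0 0 * M 1 0 * v 0 ^ 2 + M 0 1 * M 1 1 * v 1 ^ 2
        + (M 0 0 * M 1 1 + M 0 1 * M 1 0) * (v 0 * v 1) := by positivity
    _ = (M *ᵥ v) 0 * (M *ᵥ v) 1 := by simp only [mulVec, dotProduct, Fin.sum_univ_two]; ring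

theorem abs_add_abs_le_abs_sub {p q x y : R} (hp : 1 ≤ p) (hq : 1 ≤ q) (hxy : x * y ≤ 0) :
    |x| + |y| ≤ |p * x - q * y| := by
  have hp₀ : 0 < p := one_pos.trans_le hp
  have hq₀ : 0 < q := one_pos.trans_le hq
  have same_sign : 0 ≤ p * x * -(q * y) := by nlinarith [mul_pos hp₀ hq₀]
  calc |x| + |y| ≤ p * |x| + q * |y| := by
        gcongr <;> exact le_mul_of_one_le_left (abs_nonneg _) ‹_›
    _ = |p * x| + |-(q * y)| := by rw [abs_neg, abs_mul, abs_mul, abs_of_pos hp₀, abs_of_pos hq₀]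
    _ = |p * x - q * y| := by
      rw [sub_eq_add_neg, (abs_add_eq_add_abs_iff _ _).2 (mul_nonneg_iff.1 same_sign)]

theorem pos_or_neg_of_same_sign {B : Matrix (Fin 2) (Fin 2) R} (hrow : ∀ i, 0 < B i 0 * B i 1)
    (hcol : 0 < B 0 0 * B 1 0) : (∀ i j, 0 < B i j) ∨ ∀ i j, B i j < 0 := by
  have h₀ := hrow 0
  have h₁ := hrow 1
  simp only [Fin.forall_fin_two]
  rw [mul_pos_iff] at h₀ h₁ hcol
  grind

end OrderedRing

variable {M : Matrix (Fin 2) (Fin 2) ℤ} {v : Fin 2 → ℤ}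

theorem abs_mulVec_lt_of_mul_nonpos (hM : ∀ i j, 0 < M i j) (hdet : M.det = 1) (hv : v ≠ 0)
    (hMv : (M *ᵥ v) 0 * (M *ᵥ v) 1 ≤ 0) :
    |(M *ᵥ v) 0| + |(M *ᵥ v) 1| < |v 0| + |v 1| := by
  have hMv_ne : M *ᵥ v ≠ 0 := fun h => hv (eq_zero_of_mulVec_eq_zero (by simp [hdet]) h)
  have hv_eq : v = M.adjugate *ᵥ (M *ᵥ v) := by
    rw [mulVec_mulVec, adjugate_mul, hdet, one_smul, one_mulVec]
  generalize M *ᵥ v = w at *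
  have hv₀ : |w 0| + |w 1| ≤ |v 0| := by
    simpa [hv_eq, adjugate_fin_two, mulVec, dotProduct, sub_eq_add_neg]
      using abs_add_abs_le_abs_sub (hM 1 1) (hM 0 1) hMv
  have hv₁ : |w 1| + |w 0| ≤ |v 1| := by
    simpa [hv_eq, adjugate_fin_two, mulVec, dotProduct, sub_eq_add_neg, add_comm (-(M 1 0 * w 0))]
      using abs_add_abs_le_abs_sub (hM 0 0) (hM 1 0) (mul_comm (w 0) (w 1) ▸ hMv)
  have hw : 0 < |w 0| + |w 1| := by
    obtain ⟨i, hi⟩ := Function.ne_iff.1 hMv_ne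
    fin_cases i
    · exact add_pos_of_pos_of_nonneg (abs_pos.2 hi) (abs_nonneg _)
    · exact add_pos_of_nonneg_of_pos (abs_nonneg _) (abs_pos.2 hi)
  linarith

theorem exists_pow_mulVec_same_sign (hM : ∀ i j, 0 < M i j) (hdet : M.det = 1) (hv : v ≠ 0) :
    ∃ k, 0 < (M ^ k *ᵥ v) 0 * (M ^ k *ᵥ v) 1 := by
  induction hN : (|v 0| + |v 1|).toNat using Nat.strong_induction_on generalizing v with
  | _ N ih =>
    by_cases hMv : 0 < (M *ᵥ v) 0 * (M *ᵥ v) 1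
    · exact ⟨1, by simpa using hMv⟩
    · have hlt := abs_mulVec_lt_of_mul_nonpos hM hdet hv (not_lt.1 hMv)
      have decreasing : (|(M *ᵥ v) 0| + |(M *ᵥ v) 1|).toNat < (|v 0| + |v 1|).toNat :=
        (Int.toNat_lt_toNat (lt_of_le_of_lt (by positivity) hlt)).2 hlt
      have hMv_ne : M *ᵥ v ≠ 0 := fun h => hv (eq_zero_of_mulVec_eq_zero (by simp [hdet]) h)
      obtain ⟨k, hk⟩ := ih _ (hN ▸ decreasing) hMv_ne rfl
      exact ⟨k + 1, by simpa only [pow_succ, mulVec_mulVec] using hk⟩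

theorem eventually_pow_mulVec_same_sign (hM : ∀ i j, 0 < M i j) (hdet : M.det = 1) (hv : v ≠ 0) :
    ∀ᶠ k in atTop, 0 < (M ^ k *ᵥ v) 0 * (M ^ k *ᵥ v) 1 := by
  obtain ⟨K, hK⟩ := exists_pow_mulVec_same_sign hM hdet hv
  filter_upwards [eventually_ge_atTop K] with k hk
  induction k, hk using Nat.le_induction with
  | base => exact hK
  | succ k _ ih => simpa only [pow_succ', ← mulVec_mulVec] using mulVec_same_sign hM ih

end Positive

section Conjugator

theorem eventually_pow_mul_column_same_sign {M : SL(2, ℤ)} (hM : ∀ i j, 0 < M i j) (A : SL(2, ℤ))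
    (j : Fin 2) : ∀ᶠ k in atTop, 0 < (M ^ k * A) 0 j * (M ^ k * A) 1 j := by
  have hcol : A.transpose j ≠ 0 := A.transpose.row_ne_zero j
  filter_upwards [eventually_pow_mulVec_same_sign hM M.det_coe hcol] with k hk
  simpa [mulVec, dotProduct, mul_apply] using hk

theorem eventually_mul_pow_row_same_sign {M : SL(2, ℤ)} (hM : ∀ i j, 0 < M i j) (A : SL(2, ℤ))
    (i : Fin 2) : ∀ᶠ k in atTop, 0 < (A * M ^ k) i 0 * (A * M ^ k) i 1 := by
  filter_upwards [eventually_pow_mul_column_same_sign (M := M.transpose) (fun i j => hM j i)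
    A.transpose i] with k hk
  simpa [← transpose_pow, ← transpose_mul] using hk

theorem exists_pos_semiconjBy {A M M' : SL(2, ℤ)} (hM : ∀ i j, 0 < M i j)
    (hM' : ∀ i j, 0 < M' i j) (h : SemiconjBy A M M') :
    ∃ B : SL(2, ℤ), (∀ i j, 0 < B i j) ∧ SemiconjBy B M M' := by
  obtain ⟨k, hrow, hcol⟩ := ((eventually_all.2 (eventually_mul_pow_row_same_sign hM A)).and
    (eventually_pow_mul_column_same_sign hM' A 0)).exists
  rw [← (h.pow_right k).eq] at hcol
  have hB : SemiconjBy (A * M ^ k) M M' := h.mul_left (Commute.pow_self M k)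
  rcases pos_or_neg_of_same_sign hrow hcol with hpos | hneg
  · exact ⟨_, hpos, hB⟩
  · exact ⟨-(A * M ^ k), fun i j => neg_pos.2 (hneg i j),
      by rw [SemiconjBy, neg_mul, mul_neg, hB.eq]⟩

end Conjugator

section FreeMonoid

variable {M N : SL(2, ℤ)}

theorem coe_Rmat : (Rmat : Matrix (Fin 2) (Fin 2) ℤ) = !![1, 1; 0, 1] := rfl

theorem coe_Lmat : (Lmat : Matrix (Fin 2) (Fin 2) ℤ) = !![1, 0; 1, 1] := rfl

theorem Rmat_mul_apply_zero (M : SL(2, ℤ)) (j : Fin 2) : (Rmat * M) 0 j = M 0 j + M 1 j := by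
  simp [coe_Rmat, mul_apply]

theorem Rmat_mul_apply_one (M : SL(2, ℤ)) (j : Fin 2) : (Rmat * M) 1 j = M 1 j := by
  simp [coe_Rmat, mul_apply]

theorem Lmat_mul_apply_zero (M : SL(2, ℤ)) (j : Fin 2) : (Lmat * M) 0 j = M 0 j := by
  simp [coe_Lmat, mul_apply]

theorem Lmat_mul_apply_one (M : SL(2, ℤ)) (j : Fin 2) : (Lmat * M) 1 j = M 0 j + M 1 j := by
  simp [coe_Lmat, mul_apply]

theorem row_sum_pos (hM : ∀ i j, 0 ≤ M i j) (i : Fin 2) : 0 < M i 0 + M i 1 := by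
  obtain ⟨j, hj⟩ := Function.ne_iff.1 (M.row_ne_zero i)
  have hpos : 0 < M i j := (hM i j).lt_of_ne' hj
  fin_cases j
  · exact add_pos_of_pos_of_nonneg hpos (hM i 1)
  · exact add_pos_of_nonneg_of_pos (hM i 0) hpos

theorem Rmat_mul_ne_Lmat_mul (hM : ∀ i j, 0 ≤ M i j) (hN : ∀ i j, 0 ≤ N i j) :
    Rmat * M ≠ Lmat * N := by
  intro h
  have hrow (j : Fin 2) : M 0 j + N 1 j = 0 := by
    have h₀ : (Rmat * M) 0 j = (Lmat * N) 0 j := by rw [h]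
    have h₁ : (Rmat * M) 1 j = (Lmat * N) 1 j := by rw [h]
    rw [Rmat_mul_apply_zero, Lmat_mul_apply_zero] at h₀
    rw [Rmat_mul_apply_one, Lmat_mul_apply_one] at h₁
    linarith
  linarith [row_sum_pos hM 0, row_sum_pos hN 1, hrow 0, hrow 1]

theorem Rmat_mul_ne_one (hM : ∀ i j, 0 ≤ M i j) : Rmat * M ≠ 1 := by
  intro h
  have h₀ : M 0 1 + M 1 1 = 0 := by rw [← Rmat_mul_apply_zero, h]; rfl
  have h₁ : M 1 1 = 1 := by rw [← Rmat_mul_apply_one, h]; rfl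
  linarith [hM 0 1]

theorem Lmat_mul_ne_one (hM : ∀ i j, 0 ≤ M i j) : Lmat * M ≠ 1 := by
  intro h
  have h₀ : M 0 0 = 1 := by rw [← Lmat_mul_apply_zero, h]; rfl
  have h₁ : M 0 0 + M 1 0 = 0 := by rw [← Lmat_mul_apply_one, h]; rfl
  linarith [hM 1 0]

theorem eq_one_or_row_le_row (hM : ∀ i j, 0 ≤ M i j) :
    M = 1 ∨ (∀ j, M 1 j ≤ M 0 j) ∨ ∀ j, M 0 j ≤ M 1 j := by
  have hdet : M 0 0 * M 1 1 - M 0 1 * M 1 0 = 1 := by rw [← det_fin_two, M.det_coe]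
  have := hM 0 0
  have := hM 0 1
  have := hM 1 0
  have := hM 1 1
  simp only [Fin.forall_fin_two]
  by_cases hdiag : M 1 0 < M 0 0 ∧ M 0 1 < M 1 1
  · left
    have h₀₁ : M 0 1 = 0 := by nlinarith
    have h₁₀ : M 1 0 = 0 := by nlinarith
    have h₀₀ : M 0 0 = 1 := by nlinarith
    have h₁₁ : M 1 1 = 1 := by nlinarith
    ext i j
    fin_cases i <;> fin_cases j <;> simp [h₀₀, h₀₁, h₁₀, h₁₁]
  · have hantidiag : ¬(M 0 0 < M 1 0 ∧ M 1 1 < M 0 1) := fun ⟨h₀, h₁⟩ => by nlinarith [h₀, h₁]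
    omega

theorem exists_eq_Rmat_mul (hM : ∀ i j, 0 ≤ M i j) (h : ∀ j, M 1 j ≤ M 0 j) :
    ∃ N : SL(2, ℤ), (∀ i j, 0 ≤ N i j) ∧ M = Rmat * N := by
  obtain ⟨N, rfl⟩ := mul_left_surjective Rmat M
  simp only [Rmat_mul_apply_zero, Rmat_mul_apply_one, le_add_iff_nonneg_left] at h
  exact ⟨N, Fin.forall_fin_two.2 ⟨h, fun j => Rmat_mul_apply_one N j ▸ hM 1 j⟩, rfl⟩

theorem exists_eq_Lmat_mul (hM : ∀ i j, 0 ≤ M i j) (h : ∀ j, M 0 j ≤ M 1 j) :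
    ∃ N : SL(2, ℤ), (∀ i j, 0 ≤ N i j) ∧ M = Lmat * N := by
  obtain ⟨N, rfl⟩ := mul_left_surjective Lmat M
  simp only [Lmat_mul_apply_zero, Lmat_mul_apply_one, le_add_iff_nonneg_right] at h
  exact ⟨N, Fin.forall_fin_two.2 ⟨fun j => Lmat_mul_apply_zero N j ▸ hM 0 j, h⟩, rfl⟩

/-- The alphabet of the free monoid of words in the two transvections. -/
inductive Letter
  | R
  | L

/-- The transvection named by a letter. -/
def Letter.toSL : Letter → SL(2, ℤ)
  | R => Rmat
  | L => Lmat

/-- The value in `SL₂(ℤ)` of a word in `R` and `L`. -/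
def wordProd (w : List Letter) : SL(2, ℤ) := (w.map Letter.toSL).prod

theorem wordProd_nil : wordProd [] = 1 := rfl

theorem wordProd_cons (x : Letter) (w : List Letter) : wordProd (x :: w) = x.toSL * wordProd w :=
  List.prod_cons

theorem wordProd_append (u w : List Letter) : wordProd (u ++ w) = wordProd u * wordProd w := by
  simp [wordProd]

theorem wordProd_nonneg (w : List Letter) (i j : Fin 2) : 0 ≤ wordProd w i j := by
  induction w generalizing i j with
  | nil => fin_cases i <;> fin_cases j <;> simp [wordProd_nil]
  | cons x w ih =>
    have hsum : 0 ≤ wordProd w 0 j + wordProd w 1 j := add_nonneg (ih 0 j) (ih 1 j)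
    revert i
    rw [wordProd_cons, Fin.forall_fin_two]
    cases x
    case R => exact ⟨hsum.trans_eq (Rmat_mul_apply_zero _ j).symm,
      (ih 1 j).trans_eq (Rmat_mul_apply_one _ j).symm⟩
    case L => exact ⟨(ih 0 j).trans_eq (Lmat_mul_apply_zero _ j).symm,
      hsum.trans_eq (Lmat_mul_apply_one _ j).symm⟩

theorem wordProd_cons_ne_one (x : Letter) (w : List Letter) : wordProd (x :: w) ≠ 1 := by
  rw [wordProd_cons]
  cases x with
  | R => exact Rmat_mul_ne_one (wordProd_nonneg w)
  | L => exact Lmat_mul_ne_one (wordProd_nonneg w)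

theorem wordProd_injective : Function.Injective wordProd := by
  intro u
  induction u with
  | nil =>
    rintro (_ | ⟨y, w⟩) h
    · rfl
    · exact absurd h.symm (wordProd_cons_ne_one y w)
  | cons x u ih =>
    rintro (_ | ⟨y, w⟩) h
    · exact absurd h (wordProd_cons_ne_one x u)
    · rw [wordProd_cons, wordProd_cons] at h
      cases x <;> cases y
      case R.R => rw [ih (mul_left_cancel h)]
      case L.L => rw [ih (mul_left_cancel h)]
      case R.L => exact absurd h (Rmat_mul_ne_Lmat_mul (wordProd_nonneg u) (wordProd_nonneg w))
      case L.R =>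
        exact absurd h.symm (Rmat_mul_ne_Lmat_mul (wordProd_nonneg w) (wordProd_nonneg u))

theorem exists_wordProd_eq (hM : ∀ i j, 0 ≤ M i j) : ∃ w, wordProd w = M := by
  induction hS : (M 0 0 + M 0 1 + (M 1 0 + M 1 1)).toNat using Nat.strong_induction_on
    generalizing M with
  | _ S ih =>
    subst hS
    rcases eq_one_or_row_le_row hM with rfl | hrow | hrow
    · exact ⟨[], wordProd_nil⟩
    · obtain ⟨N, hN, rfl⟩ := exists_eq_Rmat_mul hM hrow
      have := row_sum_pos hN 0
      have := row_sum_pos hN 1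
      simp only [Rmat_mul_apply_zero, Rmat_mul_apply_one] at ih
      obtain ⟨w, rfl⟩ := ih _ (by omega) hN rfl
      exact ⟨.R :: w, wordProd_cons _ _⟩
    · obtain ⟨N, hN, rfl⟩ := exists_eq_Lmat_mul hM hrow
      have := row_sum_pos hN 0
      have := row_sum_pos hN 1
      simp only [Lmat_mul_apply_zero, Lmat_mul_apply_one] at ih
      obtain ⟨w, rfl⟩ := ih _ (by omega) hN rfl
      exact ⟨.L :: w, wordProd_cons _ _⟩

end FreeMonoid

section Blocks

/-- The word `R ^ a₁ L ^ b₁ ⋯ R ^ aₙ L ^ bₙ` spelled by a list of exponent pairs. The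
type `ℕ+` makes the exponents positive, so that `spell` is injective. -/
def spell (X : List (ℕ+ × ℕ+)) : List Letter :=
  X.flatMap fun x => List.replicate x.1 .R ++ List.replicate x.2 .L

theorem spell_cons (x : ℕ+ × ℕ+) (X : List (ℕ+ × ℕ+)) :
    spell (x :: X) = List.replicate x.1 .R ++ (List.replicate x.2 .L ++ spell X) := by
  simp [spell]

theorem spell_append (X Y : List (ℕ+ × ℕ+)) : spell (X ++ Y) = spell X ++ spell Y :=
  List.flatMap_append

theorem head?_spell_cons (x : ℕ+ × ℕ+) (X : List (ℕ+ × ℕ+)) :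
    (spell (x :: X)).head? = some .R := by
  simp [spell_cons, List.head?_replicate]

theorem head?_spell_ne_L (X : List (ℕ+ × ℕ+)) : (spell X).head? ≠ some .L := by
  cases X with
  | nil => simp [spell]
  | cons x X => simp [head?_spell_cons]

theorem getLast?_spell {X : List (ℕ+ × ℕ+)} (hX : X ≠ []) : (spell X).getLast? = some .L := by
  obtain ⟨X, x, rfl⟩ := List.eq_nil_or_concat' X |>.resolve_left hX
  simp [spell, List.getLast?_replicate]

theorem replicate_append_inj {α : Type*} {x : α} {m n : ℕ} {u w : List α}
    (hu : u.head? ≠ some x) (hw : w.head? ≠ some x)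
    (h : List.replicate m x ++ u = List.replicate n x ++ w) : m = n ∧ u = w := by
  induction m generalizing n with
  | zero => cases n <;> simp_all [List.replicate_succ]
  | succ m ih =>
    cases n with
    | zero => exact absurd (by rw [← List.nil_append w, ← List.replicate_zero, ← h]; rfl) hw
    | succ n =>
      simp only [List.replicate_succ, List.cons_append, List.cons.injEq, true_and] at h
      exact (ih h).imp_left (congrArg _)

theorem spell_injective : Function.Injective spell := by
  intro X
  induction X with
  | nil =>
    rintro (_ | ⟨y, Y⟩) h
    · rfl
    · simpa [spell] using (congrArg List.head? h).trans (head?_spell_cons y Y)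
  | cons x X ih =>
    rintro (_ | ⟨y, Y⟩) h
    · simpa [spell] using (congrArg List.head? h).symm.trans (head?_spell_cons x X)
    · rw [spell_cons, spell_cons] at h
      obtain ⟨hR, h⟩ := replicate_append_inj (by simp [List.head?_replicate])
        (by simp [List.head?_replicate]) h
      obtain ⟨hL, h⟩ := replicate_append_inj (head?_spell_ne_L X) (head?_spell_ne_L Y) h
      rw [Prod.ext (PNat.coe_injective hR) (PNat.coe_injective hL), ih h]

theorem exists_replicate_L_append_spell (w : List Letter) :
    ∃ (b : ℕ) (X : List (ℕ+ × ℕ+)), w ++ [.L] = List.replicate b .L ++ spell X := by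
  induction w with
  | nil => exact ⟨1, [], by simp [spell]⟩
  | cons x w ih =>
    obtain ⟨b, X, h⟩ := ih
    rw [List.cons_append, h]
    cases x with
    | L => exact ⟨b + 1, X, rfl⟩
    | R =>
      rcases b with _ | b
      · rcases X with _ | ⟨y, X⟩
        · simp [spell] at h
        · exact ⟨0, (y.1 + 1, y.2) :: X, by simp [spell_cons, List.replicate_succ]⟩
      · exact ⟨0, (1, b.succPNat) :: X, by simp [spell_cons]⟩

theorem exists_spell_eq {w : List Letter} (hhead : w.head? = some .R)
    (hlast : w.getLast? = some .L) : ∃ X, spell X = w := by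
  obtain ⟨u, rfl⟩ := List.getLast?_eq_some_iff.1 hlast
  obtain ⟨_ | b, X, h⟩ := exists_replicate_L_append_spell u
  · exact ⟨X, by simpa using h.symm⟩
  · simp [h, List.replicate_succ] at hhead

/-- The matrix `R ^ a₁ * L ^ b₁ * ⋯ * R ^ aₙ * L ^ bₙ` of a list of exponent pairs. -/
def blockProd (X : List (ℕ+ × ℕ+)) : SL(2, ℤ) :=
  (X.map fun x => Rmat ^ (x.1 : ℕ) * Lmat ^ (x.2 : ℕ)).prod

theorem wordProd_spell (X : List (ℕ+ × ℕ+)) : wordProd (spell X) = blockProd X := by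
  induction X with
  | nil => rfl
  | cons x X ih =>
    rw [spell_cons, wordProd_append, wordProd_append, ih]
    simp [wordProd, blockProd, Letter.toSL, mul_assoc]

theorem coe_Rmat_pow (k : ℕ) : ((Rmat ^ k : SL(2, ℤ)) : Matrix _ _ ℤ) = !![1, (k : ℤ); 0, 1] := by
  induction k with
  | zero => simp [one_fin_two]
  | succ k ih => simp [pow_succ, ih, coe_Rmat, add_comm]

theorem coe_Lmat_pow (k : ℕ) : ((Lmat ^ k : SL(2, ℤ)) : Matrix _ _ ℤ) = !![1, 0; (k : ℤ), 1] := by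
  induction k with
  | zero => simp [one_fin_two]
  | succ k ih => simp [pow_succ, ih, coe_Lmat]

theorem Rmat_pow_mul_Lmat_pow_pos {a b : ℕ} (ha : 0 < a) (hb : 0 < b) (i j : Fin 2) :
    0 < (Rmat ^ a * Lmat ^ b) i j := by
  rw [Matrix.SpecialLinearGroup.coe_mul, coe_Rmat_pow, coe_Lmat_pow]
  have corner_pos : (0 : ℤ) < 1 + a * b := by positivity
  revert i j
  simp [Fin.forall_fin_two, corner_pos, ha, hb]

theorem blockProd_pos {X : List (ℕ+ × ℕ+)} (hX : X ≠ []) : ∀ i j, 0 < blockProd X i j := by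
  refine List.prod_induction_nonempty (fun M : SL(2, ℤ) => ∀ i j, 0 < M i j)
    (fun M N hM hN => mul_apply_pos hM hN) (by simpa using hX) fun M hM => ?_
  obtain ⟨x, -, rfl⟩ := List.mem_map.1 hM
  exact Rmat_pow_mul_Lmat_pow_pos x.1.pos x.2.pos

end Blocks

section Rotation

variable {α : Type*}

theorem isRotated_of_append_eq_append {V X Y : List α} (h : V ++ X = Y ++ V) : X ~r Y := by
  induction hN : V.length using Nat.strong_induction_on generalizing V with
  | _ N ih =>
    rcases List.append_eq_append_iff.1 h with ⟨U, rfl, rfl⟩ | ⟨U, rfl, hU⟩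
    · exact List.isRotated_append
    · rcases Y with _ | ⟨y, Y⟩
      · simp_all
      · exact ih U.length (by rw [← hN, List.length_append, List.length_cons]; omega) hU.symm rfl

theorem exists_shift_of_isRotated_ofFn {n p : ℕ} [NeZero n] {f : ZMod n → α} {g : ZMod p → α}
    (h : (List.ofFn fun i : Fin p => g (i : ℕ)) ~r List.ofFn fun i : Fin n => f (i : ℕ)) :
    ∃ _ : n = p, ∃ k : ZMod n, ∀ i : ZMod n, f i = g ((i + k).val : ZMod p) := by
  obtain rfl : n = p := by simpa using h.perm.length_eq.symm
  obtain ⟨k, hk⟩ := h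
  refine ⟨rfl, k, fun i => ?_⟩
  have hi := List.getElem_of_eq hk.symm (i := i.val) (by simpa using ZMod.val_lt i)
  simpa [List.getElem_rotate] using hi

end Rotation

theorem isRotated_of_isConj_blockProd {X Y : List (ℕ+ × ℕ+)} (hX : X ≠ []) (hY : Y ≠ [])
    (h : IsConj (blockProd X) (blockProd Y)) : X ~r Y := by
  obtain ⟨A, hA⟩ := h
  obtain ⟨B, hB_pos, hB⟩ := exists_pos_semiconjBy (blockProd_pos hX) (blockProd_pos hY) hA
  obtain ⟨v, rfl⟩ := exists_wordProd_eq fun i j => (hB_pos i j).le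
  have hv : v ++ spell X = spell Y ++ v := wordProd_injective <| by
    simpa only [wordProd_append, wordProd_spell] using hB.eq
  obtain ⟨V, hV⟩ : ∃ V, spell V = v ++ spell X := by
    refine exists_spell_eq ?_ (by simp [getLast?_spell hX])
    obtain ⟨y, Y, rfl⟩ := List.exists_cons_of_ne_nil hY
    simp [hv, head?_spell_cons]
  refine isRotated_of_append_eq_append (V := V) (spell_injective ?_)
  rw [spell_append, spell_append, hV, hv, List.append_assoc, hv]

end PositiveWord

/-- If two positive words `R^{a₁}L^{b₁}⋯R^{aₙ}L^{bₙ}` and `R^{c₁}L^{d₁}⋯R^{c_p}L^{d_p}`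
are conjugate in `SL₂(ℤ)`, then `n = p` and the sequences of exponent pairs agree up to a
cyclic permutation. -/
theorem positive_word_unique_up_to_cyclic_permutation
    (n p : ℕ) (hn : 1 ≤ n) (hp : 1 ≤ p)
    (a b : ZMod n → ℕ) (c d : ZMod p → ℕ)
    (ha : ∀ i, 0 < a i) (hb : ∀ i, 0 < b i)
    (hc : ∀ i, 0 < c i) (hd : ∀ i, 0 < d i)
    (hconj : ∃ A : Matrix.SpecialLinearGroup (Fin 2) ℤ,
      A * (List.ofFn fun i : Fin n =>
            Rmat ^ a ((i : ℕ) : ZMod n) * Lmat ^ b ((i : ℕ) : ZMod n)).prod * A⁻¹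
        = (List.ofFn fun i : Fin p =>
            Rmat ^ c ((i : ℕ) : ZMod p) * Lmat ^ d ((i : ℕ) : ZMod p)).prod) :
    ∃ _ : n = p, ∃ k : ZMod n, ∀ i : ZMod n,
      a i = c (((i + k).val : ZMod p)) ∧ b i = d (((i + k).val : ZMod p)) := by
  have : NeZero n := ⟨by omega⟩
  let x (i : ZMod n) : ℕ+ × ℕ+ := (⟨a i, ha i⟩, ⟨b i, hb i⟩)
  let y (i : ZMod p) : ℕ+ × ℕ+ := (⟨c i, hc i⟩, ⟨d i, hd i⟩)
  have hrot : (List.ofFn fun i : Fin n => x (i : ℕ)) ~r List.ofFn fun i : Fin p => y (i : ℕ) := by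
    apply PositiveWord.isRotated_of_isConj_blockProd
    · exact mt List.ofFn_eq_nil_iff.1 (by omega)
    · exact mt List.ofFn_eq_nil_iff.1 (by omega)
    · rw [PositiveWord.blockProd, PositiveWord.blockProd, List.map_ofFn, List.map_ofFn]
      exact isConj_iff.2 hconj
  obtain ⟨hnp, k, hk⟩ := PositiveWord.exists_shift_of_isRotated_ofFn hrot.symm
  refine ⟨hnp, k, fun i => ⟨?_, ?_⟩⟩
  · exact congrArg (fun z : ℕ+ × ℕ+ => (z.1 : ℕ)) (hk i)
  · exact congrArg (fun z : ℕ+ × ℕ+ => (z.2 : ℕ)) (hk i)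
end

section
/- For every n ≥ 1 and all positive integers a₁, b₁, …, aₙ, bₙ, the product M = R^{a₁}·L^{b₁}·R^{a₂}·L^{b₂}·⋯·R^{aₙ}·L^{bₙ} in SL₂(ℤ) satisfies trace(M) > 2; consequently M has two distinct eigenvalues in ℝ₊*. -/
/-!
Suppose `!![1, A; B, 1] ≤ M` entrywise, with `A, B ≥ 0`. Left multiplication of `M` by
`R ^ c * L ^ d` gives the same bound with `A + c`, `B + d` in place of `A`, `B`, and raises the
trace by at least `c * d + c * B + d * A`. By induction the trace of the word is at
least `2 + (∑ aᵢ) * (∑ bᵢ)`.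
-/

section TransvectionWord

variable {S : Type*} [CommSemiring S]

/-- The product of the matrices `!![1, xᵢ; 0, 1] * !![1, 0; yᵢ, 1]` in increasing order of `i`.
It extends the word `R ^ x₁ * L ^ y₁ * ⋯ * R ^ xₙ * L ^ yₙ` from natural exponents to parameters in
an arbitrary commutative semiring. -/
def transvectionWord {n : ℕ} (x y : Fin n → S) : Matrix (Fin 2) (Fin 2) S :=
  (List.ofFn fun i => !![1, x i; 0, 1] * !![1, 0; y i, 1]).prod

lemma transvectionWord_zero (x y : Fin 0 → S) : transvectionWord x y = 1 := by
  simp [transvectionWord]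

lemma transvectionWord_succ {n : ℕ} (x y : Fin (n + 1) → S) :
    transvectionWord x y =
      !![1, x 0; 0, 1] * (!![1, 0; y 0, 1] * transvectionWord (Fin.tail x) (Fin.tail y)) := by
  simp only [transvectionWord, List.ofFn_succ, List.prod_cons, Matrix.mul_assoc, Fin.tail]

lemma upper_mul_lower_mul_eq (c d : S) (M : Matrix (Fin 2) (Fin 2) S) :
    !![1, c; 0, 1] * (!![1, 0; d, 1] * M) =
      !![M 0 0 + c * (d * M 0 0 + M 1 0), M 0 1 + c * (d * M 0 1 + M 1 1);
        d * M 0 0 + M 1 0, d * M 0 1 + M 1 1] := by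
  rw [M.eta_fin_two]
  simp

variable [PartialOrder S]

lemma transvectionWord_entry_bounds [IsOrderedRing S] {n : ℕ} {x y : Fin n → S}
    (hx : 0 ≤ x) (hy : 0 ≤ y) :
    1 ≤ transvectionWord x y 0 0 ∧ ∑ i, x i ≤ transvectionWord x y 0 1 ∧
      ∑ i, y i ≤ transvectionWord x y 1 0 ∧ 1 ≤ transvectionWord x y 1 1 := by
  induction n with
  | zero => simp [transvectionWord_zero]
  | succ n ih =>
    have hx_tail : 0 ≤ Fin.tail x := fun i => hx i.succ
    have hy_tail : 0 ≤ Fin.tail y := fun i => hy i.succ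
    obtain ⟨h00, h01, h10, h11⟩ := ih hx_tail hy_tail
    rw [transvectionWord_succ, upper_mul_lower_mul_eq, Fin.sum_univ_succ, Fin.sum_univ_succ]
    set M := transvectionWord (Fin.tail x) (Fin.tail y)
    have hx0 : 0 ≤ x 0 := hx 0
    have hy0 : 0 ≤ y 0 := hy 0
    have M01_nonneg : 0 ≤ M 0 1 := (Fintype.sum_nonneg hx_tail).trans h01
    have row_one_left : y 0 + ∑ i, Fin.tail y i ≤ y 0 * M 0 0 + M 1 0 :=
      add_le_add (le_mul_of_one_le_right hy0 h00) h10
    have row_one_right : 1 ≤ y 0 * M 0 1 + M 1 1 :=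
      le_add_of_nonneg_of_le (mul_nonneg hy0 M01_nonneg) h11
    have row_one_left_nonneg : 0 ≤ y 0 * M 0 0 + M 1 0 :=
      (add_nonneg hy0 (Fintype.sum_nonneg hy_tail)).trans row_one_left
    refine ⟨?_, ?_, row_one_left, row_one_right⟩
    · exact le_add_of_le_of_nonneg h00 (mul_nonneg hx0 row_one_left_nonneg)
    · rw [add_comm (x 0)]
      exact add_le_add h01 (le_mul_of_one_le_right hx0 row_one_right)

lemma two_add_sum_mul_sum_le_trace_transvectionWord [IsOrderedRing S] {n : ℕ} {x y : Fin n → S}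
    (hx : 0 ≤ x) (hy : 0 ≤ y) :
    2 + (∑ i, x i) * ∑ i, y i ≤ (transvectionWord x y).trace := by
  induction n with
  | zero => simp [transvectionWord_zero]
  | succ n ih =>
    have hx_tail : 0 ≤ Fin.tail x := fun i => hx i.succ
    have hy_tail : 0 ≤ Fin.tail y := fun i => hy i.succ
    obtain ⟨h00, h01, h10, -⟩ := transvectionWord_entry_bounds hx_tail hy_tail
    have trace_tail := ih hx_tail hy_tail
    rw [transvectionWord_succ, upper_mul_lower_mul_eq, Matrix.trace_fin_two_of,
      Fin.sum_univ_succ, Fin.sum_univ_succ]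
    set M := transvectionWord (Fin.tail x) (Fin.tail y)
    have hx0 : 0 ≤ x 0 := hx 0
    have hy0 : 0 ≤ y 0 := hy 0
    calc 2 + (x 0 + ∑ i, Fin.tail x i) * (y 0 + ∑ i, Fin.tail y i)
        = (2 + (∑ i, Fin.tail x i) * ∑ i, Fin.tail y i)
            + x 0 * (y 0 * 1 + ∑ i, Fin.tail y i) + y 0 * ∑ i, Fin.tail x i := by ring
      _ ≤ M.trace + x 0 * (y 0 * M 0 0 + M 1 0) + y 0 * M 0 1 := by gcongr
      _ = M 0 0 + x 0 * (y 0 * M 0 0 + M 1 0) + (y 0 * M 0 1 + M 1 1) := by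
        rw [Matrix.trace_fin_two]; ring

-- In the pointwise order, `0 < x` means that `x` is nonnegative with some positive coordinate.
theorem trace_of_positive_word_gt_two_general [IsStrictOrderedRing S] {n : ℕ} {x y : Fin n → S}
    (hx : 0 < x) (hy : 0 < y) : 2 < (transvectionWord x y).trace :=
  calc 2 < 2 + (∑ i, x i) * ∑ i, y i :=
        lt_add_of_pos_right 2 (mul_pos (Fintype.sum_pos hx) (Fintype.sum_pos hy))
    _ ≤ (transvectionWord x y).trace := two_add_sum_mul_sum_le_trace_transvectionWord hx.le hy.le

end TransvectionWord

lemma coe_Rmat_pow (k : ℕ) : (↑(Rmat ^ k) : Matrix (Fin 2) (Fin 2) ℤ) = !![1, (k : ℤ); 0, 1] := by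
  have Rmat_eq_T : Rmat = ModularGroup.T := rfl
  rw [Rmat_eq_T, ← zpow_natCast, ModularGroup.coe_T_zpow]

lemma coe_Lmat_pow (k : ℕ) : (↑(Lmat ^ k) : Matrix (Fin 2) (Fin 2) ℤ) = !![1, 0; (k : ℤ), 1] := by
  have coe_Lmat : Lmat.1 = Rmat.1.transpose := by
    simp [Lmat, Rmat, ← Matrix.ext_iff]
  rw [Matrix.SpecialLinearGroup.coe_pow, coe_Lmat, ← Matrix.transpose_pow,
    ← Matrix.SpecialLinearGroup.coe_pow, coe_Rmat_pow]
  simp [← Matrix.ext_iff]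

lemma coe_prod_ofFn_Rmat_pow_mul_Lmat_pow {n : ℕ} (a b : Fin n → ℕ) :
    (↑(List.ofFn fun i => Rmat ^ a i * Lmat ^ b i).prod : Matrix (Fin 2) (Fin 2) ℤ) =
      transvectionWord (fun i => (a i : ℤ)) fun i => (b i : ℤ) := by
  rw [← Matrix.SpecialLinearGroup.coeMonoidHom_apply, map_list_prod, List.map_ofFn]
  simp only [Function.comp_def, Matrix.SpecialLinearGroup.coeMonoidHom_apply,
    Matrix.SpecialLinearGroup.coe_mul, coe_Rmat_pow, coe_Lmat_pow, transvectionWord]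

/-- Any nonempty product `R^{a₁}L^{b₁}⋯R^{aₙ}L^{bₙ}` of positive powers of the standard
transvection matrices has trace `> 2` (hence two distinct eigenvalues in `ℝ₊*`). -/
theorem trace_of_positive_word_gt_two (n : ℕ) (hn : 1 ≤ n) (a b : Fin n → ℕ)
    (ha : ∀ i, 0 < a i) (hb : ∀ i, 0 < b i) :
    2 < Matrix.trace
      (((List.ofFn fun i : Fin n => Rmat ^ a i * Lmat ^ b i).prod :
        Matrix.SpecialLinearGroup (Fin 2) ℤ) : Matrix (Fin 2) (Fin 2) ℤ) := by
  have : Nonempty (Fin n) := ⟨⟨0, hn⟩⟩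
  rw [coe_prod_ofFn_Rmat_pow_mul_Lmat_pow]
  exact trace_of_positive_word_gt_two_general
    (lt_of_strongLT fun i => Int.natCast_pos.2 (ha i))
    (lt_of_strongLT fun i => Int.natCast_pos.2 (hb i))
end

section
/- The function 𝒱 is continuous on the closed simplex S = {(x,y,z) ∈ ℝ³ : x ≥ 0, y ≥ 0, z ≥ 0, x + y + z = π}, and 𝒱(x,y,z) = 0 for every point of S at which at least one of the coordinates x, y, z vanishes. -/
/-- The Lobachevsky-type integral `∫₀ˣ log(2 sin u) du`. -/
noncomputable def lob (x : ℝ) : ℝ := ∫ u in (0:ℝ)..x, Real.log (2 * Real.sin u)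

/-- The volume `𝒱(x,y,z)` of the ideal hyperbolic tetrahedron with dihedral angles
`x, y, z`. -/
noncomputable def idealVol (p : ℝ × ℝ × ℝ) : ℝ := -lob p.1 - lob p.2.1 - lob p.2.2

/-- The closed simplex of nonnegative angle triples summing to `π`. -/
def angleSimplex : Set (ℝ × ℝ × ℝ) :=
  {p | 0 ≤ p.1 ∧ 0 ≤ p.2.1 ∧ 0 ≤ p.2.2 ∧ p.1 + p.2.1 + p.2.2 = Real.pi}

/-!
As `Real.log t = log |t|`, the integrand of `lob` is `log |2 sin u|` on all of `ℝ`. Its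
singularities are logarithmic, hence integrable, so `lob` is continuous. The integrand is symmetric
about `π / 2`, and its integral over `[0, π]` vanishes by Euler's evaluation
`∫₀^π log (sin u) du = -π log 2`; therefore `lob x + lob (π - x) = 0`. When one angle is zero the
other two are supplementary, and their contributions to the volume cancel.
-/

open Real intervalIntegral MeasureTheory

theorem integral_zero_add_integral_zero_sub_of_symmetric {E : Type*} [NormedAddCommGroup E]
    [NormedSpace ℝ E] {f : ℝ → E} {a x : ℝ} (hsymm : ∀ u, f (a - u) = f u)
    (hleft : IntervalIntegrable f volume 0 x) (hright : IntervalIntegrable f volume x a) :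
    (∫ u in 0..x, f u) + ∫ u in 0..(a - x), f u = ∫ u in 0..a, f u := by
  have hreflect : ∫ u in 0..(a - x), f u = ∫ u in x..a, f u := by
    simpa only [hsymm, sub_self] using (integral_comp_sub_left (a := x) (b := a) f a).symm
  rw [hreflect, integral_add_adjacent_intervals hleft hright]

theorem intervalIntegrable_log_const_mul_sin (c a b : ℝ) :
    IntervalIntegrable (fun u ↦ log (c * sin u)) volume a b := by
  have hanalytic : AnalyticOnNhd ℝ (fun u ↦ c * sin u) (Set.uIcc a b) := fun _ _ ↦ by fun_prop
  exact hanalytic.meromorphicOn.intervalIntegrable_log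

theorem integral_log_const_mul_sin_zero_pi {c : ℝ} (hc : c ≠ 0) :
    ∫ u in 0..π, log (c * sin u) = π * log (c / 2) := by
  have hsplit : Set.EqOn (fun u ↦ log (c * sin u)) (fun u ↦ log c + log (sin u)) (Set.Ioo 0 π) :=
    fun _ hu ↦ log_mul hc (sin_pos_of_mem_Ioo hu).ne'
  calc ∫ u in 0..π, log (c * sin u)
      = ∫ u in 0..π, (log c + log (sin u)) := integral_congr_Ioo_of_le pi_pos.le hsplit
    _ = (∫ _ in 0..π, log c) + ∫ u in 0..π, log (sin u) :=
        integral_add intervalIntegrable_const intervalIntegrable_log_sin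
    _ = π * log (c / 2) := by
        rw [intervalIntegral.integral_const, integral_log_sin_zero_pi, log_div hc two_ne_zero,
          smul_eq_mul]
        ring

theorem lob_zero : lob 0 = 0 :=
  integral_same

theorem lob_pi : lob π = 0 := by
  simpa [lob] using integral_log_const_mul_sin_zero_pi two_ne_zero

theorem continuous_lob : Continuous lob :=
  continuous_primitive (intervalIntegrable_log_const_mul_sin 2) 0

theorem lob_add_lob_pi_sub (x : ℝ) : lob x + lob (π - x) = 0 := by
  have hsymm (u : ℝ) : log (2 * sin (π - u)) = log (2 * sin u) := by rw [sin_pi_sub]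
  exact (integral_zero_add_integral_zero_sub_of_symmetric hsymm
    (intervalIntegrable_log_const_mul_sin 2 0 x)
    (intervalIntegrable_log_const_mul_sin 2 x π)).trans lob_pi

theorem lob_add_lob_of_add_eq_pi {x y : ℝ} (h : x + y = π) : lob x + lob y = 0 := by
  rw [eq_sub_of_add_eq' h, lob_add_lob_pi_sub]

theorem continuous_idealVol : Continuous idealVol := by
  have := continuous_lob
  unfold idealVol
  fun_prop

theorem idealVol_eq_zero_of_add_eq_pi {x y z : ℝ} (hsum : x + y + z = π)
    (hzero : x = 0 ∨ y = 0 ∨ z = 0) : idealVol (x, y, z) = 0 := by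
  simp only [idealVol]
  rcases hzero with rfl | rfl | rfl
  · linarith [lob_zero, lob_add_lob_of_add_eq_pi (x := y) (y := z) (by linarith)]
  · linarith [lob_zero, lob_add_lob_of_add_eq_pi (x := x) (y := z) (by linarith)]
  · linarith [lob_zero, lob_add_lob_of_add_eq_pi (x := x) (y := y) (by linarith)]

/-- `𝒱` is continuous on the closed angle simplex and vanishes at every point of the
simplex where one of the coordinates is zero. -/
theorem idealVol_continuousOn_and_zero_on_boundary :
    ContinuousOn idealVol angleSimplex ∧
    ∀ p ∈ angleSimplex, (p.1 = 0 ∨ p.2.1 = 0 ∨ p.2.2 = 0) → idealVol p = 0 := by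
  refine ⟨continuous_idealVol.continuousOn, ?_⟩
  rintro ⟨x, y, z⟩ ⟨-, -, -, hsum⟩ hzero
  exact idealVol_eq_zero_of_add_eq_pi hsum hzero
end

section
/- Let x, y, z be real numbers with x > 0, y > 0, z > 0 and x + y + z = π, and let X, Y, Z be real numbers with X + Y + Z = 0. Then X²·(cos x / sin x) + Y²·(cos y / sin y) + Z²·(cos z / sin z) ≥ 0. (This quadratic form is the negative of the second derivative of the ideal-tetrahedron volume along an affine path of angles, and its nonnegativity is the computational core of the concavity of the volume.) -/
/-!
On the plane `X + Y + Z = 0`, completing the square gives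
`(a + b) (a X² + b Y² + c Z²) = (a X - b Y)² + (a b + b c + c a) Z²`.
The cotangents `a, b, c` of the angles of a triangle satisfy `a b + b c + c a = 1` and `0 < a + b`,
so the form is nonnegative.
-/

section QuadraticForm

variable {R : Type*} [CommRing R]

theorem add_mul_diagonal_form_eq_of_add_eq_zero (a b c : R) {X Y Z : R} (h : X + Y + Z = 0) :
    (a + b) * (X ^ 2 * a + Y ^ 2 * b + Z ^ 2 * c) =
      (a * X - b * Y) ^ 2 + (a * b + b * c + c * a) * Z ^ 2 := by
  obtain rfl : Z = -(X + Y) := eq_neg_of_add_eq_zero_right h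
  ring

theorem diagonal_form_nonneg_of_add_eq_zero [LinearOrder R] [IsStrictOrderedRing R]
    {a b c X Y Z : R} (hab : 0 < a + b) (habc : 0 ≤ a * b + b * c + c * a) (h : X + Y + Z = 0) :
    0 ≤ X ^ 2 * a + Y ^ 2 * b + Z ^ 2 * c := by
  refine nonneg_of_mul_nonneg_right ?_ hab
  rw [add_mul_diagonal_form_eq_of_add_eq_zero a b c h]
  positivity

end QuadraticForm

section Cotangent

open Real

variable {x y z : ℝ}

theorem cot_add_cot_eq_sin_add_div (hx : sin x ≠ 0) (hy : sin y ≠ 0) :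
    cot x + cot y = sin (x + y) / (sin x * sin y) := by
  rw [cot_eq_cos_div_sin, cot_eq_cos_div_sin, div_add_div _ _ hx hy, sin_add, add_comm]

theorem cot_add_cot_pos (hx : 0 < x) (hy : 0 < y) (hxy : x + y < π) : 0 < cot x + cot y := by
  have sin_x_pos : 0 < sin x := sin_pos_of_pos_of_lt_pi hx (by linarith)
  have sin_y_pos : 0 < sin y := sin_pos_of_pos_of_lt_pi hy (by linarith)
  have sin_add_pos : 0 < sin (x + y) := sin_pos_of_pos_of_lt_pi (add_pos hx hy) hxy
  rw [cot_add_cot_eq_sin_add_div sin_x_pos.ne' sin_y_pos.ne']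
  positivity

theorem cot_mul_cot_cyclic_sum_eq_one (hx : sin x ≠ 0) (hy : sin y ≠ 0) (hz : sin z ≠ 0)
    (hsum : sin (x + y + z) = 0) :
    cot x * cot y + cot y * cot z + cot z * cot x = 1 := by
  rw [sin_add, sin_add, cos_add] at hsum
  simp only [cot_eq_cos_div_sin]
  field_simp
  linear_combination hsum

end Cotangent

/-- For angles `x, y, z` of a Euclidean triangle (positive, summing to `π`) and reals
`X, Y, Z` with `X + Y + Z = 0`, the quadratic form
`X² cot x + Y² cot y + Z² cot z` is nonnegative.  This is the computational core of the
concavity of the ideal-tetrahedron volume. -/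
theorem cot_quadratic_form_nonneg (x y z X Y Z : ℝ)
    (hx : 0 < x) (hy : 0 < y) (hz : 0 < z) (hsum : x + y + z = Real.pi)
    (hXYZ : X + Y + Z = 0) :
    0 ≤ X ^ 2 * (Real.cos x / Real.sin x) + Y ^ 2 * (Real.cos y / Real.sin y) +
        Z ^ 2 * (Real.cos z / Real.sin z) := by
  have sin_x_pos : 0 < Real.sin x := Real.sin_pos_of_pos_of_lt_pi hx (by linarith)
  have sin_y_pos : 0 < Real.sin y := Real.sin_pos_of_pos_of_lt_pi hy (by linarith)
  have sin_z_pos : 0 < Real.sin z := Real.sin_pos_of_pos_of_lt_pi hz (by linarith)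
  have cot_sum_pos : 0 < Real.cot x + Real.cot y := cot_add_cot_pos hx hy (by linarith)
  have cot_cyclic_sum :
      Real.cot x * Real.cot y + Real.cot y * Real.cot z + Real.cot z * Real.cot x = 1 :=
    cot_mul_cot_cyclic_sum_eq_one sin_x_pos.ne' sin_y_pos.ne' sin_z_pos.ne'
      (by rw [hsum, Real.sin_pi])
  simp only [← Real.cot_eq_cos_div_sin]
  exact diagonal_form_nonneg_of_add_eq_zero cot_sum_pos (cot_cyclic_sum ▸ zero_le_one) hXYZ
end

section
/- Let U and V be positive real constants and define f : (−1,1) → ℝ by f(λ) := ((1−λ²)/4) · U · ( ((1+λ)/(1−λ)) · V )^λ (real power of a positive real). Then f attains the absolute minimum value U / ((1+V)(1+V⁻¹)) on (−1,1): for every λ ∈ (−1,1), f(λ) ≥ U/((1+V)(1+V⁻¹)), with equality at λ₀ = (1−V)/(1+V) (the unique λ with ((1+λ)/(1−λ))·V = 1). -/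
/-!
Put `p = (1 + λ) / 2` and `q = (1 - λ) / 2`, so that `p + q = 1` and `p - q = λ`. Any positive
`x, y` satisfy `(y / x) ^ (p - q) * (x ^ p * y ^ q) ^ 2 = x * y`, and the weighted AM-GM inequality
`x ^ p * y ^ q ≤ p * x + q * y` turns this into a lower bound for `(y / x) ^ (p - q)`. The choice
`x = 1 - λ`, `y = (1 + λ) * V` makes `x * y` and `p * x + q * y` constant multiples of
`1 - λ ^ 2`, so the bound for `f` no longer depends on `λ`. Equality in AM-GM means `x = y`, which
is the equation `(1 + λ) / (1 - λ) * V = 1` for the minimizer.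
-/

section WeightedMeans

variable {x y p q : ℝ}

theorem div_rpow_sub_mul_sq_geom_mean (hx : 0 < x) (hy : 0 < y) (hpq : p + q = 1) :
    (y / x) ^ (p - q) * (x ^ p * y ^ q) ^ 2 = x * y := by
  have rpow_mul_rpow_eq_self {z : ℝ} (hz : 0 < z) : z ^ p * z ^ q = z := by
    rw [← Real.rpow_add hz, hpq, Real.rpow_one]
  calc (y / x) ^ (p - q) * (x ^ p * y ^ q) ^ 2
      = (x ^ p * x ^ q) * (y ^ p * y ^ q) := by
        rw [Real.div_rpow hy.le hx.le, Real.rpow_sub hy, Real.rpow_sub hx]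
        field_simp
    _ = x * y := by rw [rpow_mul_rpow_eq_self hx, rpow_mul_rpow_eq_self hy]

theorem mul_div_sq_arith_mean_le_div_rpow_sub (hx : 0 < x) (hy : 0 < y) (hp : 0 ≤ p) (hq : 0 ≤ q)
    (hpq : p + q = 1) :
    x * y / (p * x + q * y) ^ 2 ≤ (y / x) ^ (p - q) :=
  calc x * y / (p * x + q * y) ^ 2
      ≤ x * y / (x ^ p * y ^ q) ^ 2 := by
        gcongr
        exact Real.geom_mean_le_arith_mean2_weighted hp hq hx.le hy.le hpq
    _ = (y / x) ^ (p - q) := by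
        rw [← div_rpow_sub_mul_sq_geom_mean hx hy hpq, mul_div_cancel_right₀ _ (by positivity)]

end WeightedMeans

theorem div_one_add_sq_le_mul_rpow {V l : ℝ} (hV : 0 < V) (hl : l ∈ Set.Ioo (-1 : ℝ) 1) :
    V / (1 + V) ^ 2 ≤ (1 - l ^ 2) / 4 * ((1 + l) / (1 - l) * V) ^ l := by
  have one_add_pos : 0 < 1 + l := by linarith [hl.1]
  have one_sub_pos : 0 < 1 - l := by linarith [hl.2]
  have factor : 1 - l ^ 2 = (1 + l) * (1 - l) := by ring
  have weighted_mean :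
      (1 + l) / 2 * (1 - l) + (1 - l) / 2 * ((1 + l) * V) = (1 - l ^ 2) / 2 * (1 + V) := by ring
  have rpow_bound : (1 - l) * ((1 + l) * V) / ((1 - l ^ 2) / 2 * (1 + V)) ^ 2 ≤
      ((1 + l) / (1 - l) * V) ^ l := by
    convert mul_div_sq_arith_mean_le_div_rpow_sub one_sub_pos (mul_pos one_add_pos hV)
      (half_pos one_add_pos).le (half_pos one_sub_pos).le (by ring) using 2
    · rw [weighted_mean]
    · ring
    · ring
  calc V / (1 + V) ^ 2
      = (1 - l ^ 2) / 4 *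
          ((1 - l) * ((1 + l) * V) / ((1 - l ^ 2) / 2 * (1 + V)) ^ 2) := by
        rw [factor]
        field_simp
        norm_num
    _ ≤ (1 - l ^ 2) / 4 * ((1 + l) / (1 - l) * V) ^ l := by
        gcongr
        rw [factor]
        positivity

theorem one_sub_div_one_add_mem_Ioo {K : Type*} [Field K] [LinearOrder K] [IsStrictOrderedRing K]
    {V : K} (hV : 0 < V) : (1 - V) / (1 + V) ∈ Set.Ioo (-1 : K) 1 := by
  have one_add_pos : 0 < 1 + V := by positivity
  constructor
  · rw [lt_div_iff₀ one_add_pos]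
    linarith
  · rw [div_lt_one one_add_pos]
    linarith

section CriticalPoint

variable {K : Type*} [Field K] {V : K}

theorem one_sub_sq_one_sub_div_one_add (hV : 1 + V ≠ 0) :
    1 - ((1 - V) / (1 + V)) ^ 2 = 4 * (V / (1 + V) ^ 2) := by
  field_simp
  ring

theorem one_add_div_one_sub_mul_eq_one_iff {l : K} (hl : l ≠ 1) (hV : 1 + V ≠ 0) :
    (1 + l) / (1 - l) * V = 1 ↔ l = (1 - V) / (1 + V) := by
  rw [div_mul_eq_mul_div, div_eq_one_iff_eq (sub_ne_zero.2 hl.symm), eq_div_iff hV]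
  constructor <;> intro h <;> linear_combination h

theorem div_one_add_mul_one_add_inv (U : K) (hV₀ : V ≠ 0) :
    U / ((1 + V) * (1 + V⁻¹)) = V / (1 + V) ^ 2 * U := by
  have inv_factor : 1 + V⁻¹ = (1 + V) / V := by
    field_simp
    ring
  rw [inv_factor, mul_div_assoc', div_div_eq_mul_div, sq]
  ring

end CriticalPoint

/-- For positive constants `U, V`, the function
`f(λ) = ((1−λ²)/4) · U · (((1+λ)/(1−λ)) · V)^λ` on `(−1,1)` attains the absolute minimum
value `U / ((1+V)(1+V⁻¹))`, at the unique point `λ₀ = (1−V)/(1+V)` where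
`((1+λ)/(1−λ)) · V = 1`. -/
theorem min_of_degenerate_derivative_function (U V : ℝ) (hU : 0 < U) (hV : 0 < V) :
    (∀ l ∈ Set.Ioo (-1 : ℝ) 1,
      U / ((1 + V) * (1 + V⁻¹)) ≤ (1 - l ^ 2) / 4 * U * ((1 + l) / (1 - l) * V) ^ l) ∧
    (1 - V) / (1 + V) ∈ Set.Ioo (-1 : ℝ) 1 ∧
    (1 - ((1 - V) / (1 + V)) ^ 2) / 4 * U *
        ((1 + (1 - V) / (1 + V)) / (1 - (1 - V) / (1 + V)) * V) ^ ((1 - V) / (1 + V)) =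
      U / ((1 + V) * (1 + V⁻¹)) := by
  have one_add_ne : 1 + V ≠ 0 := by positivity
  rw [div_one_add_mul_one_add_inv U hV.ne']
  have argmin_mem := one_sub_div_one_add_mem_Ioo hV
  refine ⟨fun l hl => ?_, argmin_mem, ?_⟩
  · rw [mul_right_comm]
    exact mul_le_mul_of_nonneg_right (div_one_add_sq_le_mul_rpow hV hl) hU.le
  · have base_eq_one := (one_add_div_one_sub_mul_eq_one_iff argmin_mem.2.ne one_add_ne).2 rfl
    rw [base_eq_one, Real.one_rpow, mul_one, one_sub_sq_one_sub_div_one_add one_add_ne,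
      mul_div_cancel_left₀ _ four_ne_zero]
end

section
/- Fix m ≥ 1 and a nonconstant cyclic word Ω : ℤ/mℤ → Bool, with hinge indices i defined by Ω(i−1) ≠ Ω(i). Let P ⊆ (ℤ/mℤ → ℝ) be the set of all w satisfying: (range) 0 < w(i) < π/2 for all i; (concavity) w(i−1) + w(i+1) < 2·w(i) at every nonhinge index i; (hinge) |w(i+1) − w(i−1)| < w(i) at every hinge index i. Then P is an open, convex, bounded, and nonempty subset of ℝ^m. -/
open Real

/-- `i` is a hinge index iff the letters (`false` = `L`, `true` = `R`) just before and
just after layer `i` differ. -/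
def IsHinge {m : ℕ} (Ω : ZMod m → Bool) (i : ZMod m) : Prop := Ω (i - 1) ≠ Ω i

/-- The open polytope `P` of angle structures: range, concavity and hinge conditions
with strict inequalities. -/
def Ppoly (m : ℕ) (Ω : ZMod m → Bool) : Set (ZMod m → ℝ) :=
  {w | (∀ i, 0 < w i ∧ w i < π / 2) ∧
       (∀ i, ¬IsHinge Ω i → w (i - 1) + w (i + 1) < 2 * w i) ∧
       (∀ i, IsHinge Ω i → |w (i + 1) - w (i - 1)| < w i)}

/-!
Openness, convexity and boundedness hold because `Ppoly m Ω` is a finite intersection of open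
half-spaces inside the open box `(0, π/2)^m`.

For nonemptiness, let `d i` be the number of steps back from `i` to the nearest hinge, and put
`w i = 3/2 - 2^(-(d i + 1))`. At a nonhinge `i` we have `d (i - 1) = d i - 1`, while `d (i + 1)` is
`d i + 1` or `0`. Since the profile `n ↦ 3/2 - 2^(-(n + 1))` is both strictly concave and
increasing, concavity holds in either case. Its values lie in `[1, 3/2)`, so any two of them differ
by less than `1/2`, which gives the hinge condition.
-/

open Set

section Convexity

variable {E : Type*} [AddCommGroup E] [Module ℝ E] (f g : E →ₗ[ℝ] ℝ)

theorem convex_setOf_linearMap_lt : Convex ℝ {x | f x < g x} := by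
  simpa only [LinearMap.sub_apply, sub_neg] using convex_halfSpace_lt (f - g).isLinear 0

theorem convex_setOf_abs_linearMap_lt : Convex ℝ {x | |f x| < g x} := by
  simp only [abs_lt, ofPred_and]
  exact (convex_setOf_linearMap_lt (-g) f).inter (convex_setOf_linearMap_lt f g)

end Convexity

section Polytope

variable {m : ℕ} (Ω : ZMod m → Bool)

theorem Ppoly_eq_pi_inter_iInter :
    Ppoly m Ω = univ.pi (fun _ ↦ Ioo 0 (π / 2)) ∩
      ((⋂ (i) (_ : ¬IsHinge Ω i), {w | w (i - 1) + w (i + 1) < 2 * w i}) ∩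
        ⋂ (i) (_ : IsHinge Ω i), {w | |w (i + 1) - w (i - 1)| < w i}) := by
  ext w
  simp [Ppoly]

theorem isOpen_Ppoly [NeZero m] : IsOpen (Ppoly m Ω) := by
  rw [Ppoly_eq_pi_inter_iInter]
  refine (isOpen_set_pi finite_univ fun _ _ ↦ isOpen_Ioo).inter (.inter ?_ ?_) <;>
    exact isOpen_iInter_of_finite fun i ↦ isOpen_iInter_of_finite fun _ ↦
      isOpen_lt (by fun_prop) (by fun_prop)

theorem convex_Ppoly : Convex ℝ (Ppoly m Ω) := by
  rw [Ppoly_eq_pi_inter_iInter]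
  let coord (i : ZMod m) : (ZMod m → ℝ) →ₗ[ℝ] ℝ := LinearMap.proj i
  refine (convex_pi fun _ _ ↦ convex_Ioo 0 (π / 2)).inter (.inter ?_ ?_)
  · exact convex_iInter₂ fun i _ ↦
      convex_setOf_linearMap_lt (coord (i - 1) + coord (i + 1)) ((2 : ℝ) • coord i)
  · exact convex_iInter₂ fun i _ ↦
      convex_setOf_abs_linearMap_lt (coord (i + 1) - coord (i - 1)) (coord i)

theorem isBounded_Ppoly : Bornology.IsBounded (Ppoly m Ω) := by
  rw [Ppoly_eq_pi_inter_iInter]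
  exact (Bornology.IsBounded.pi fun _ ↦ Metric.isBounded_Ioo 0 (π / 2)).subset inter_subset_left

end Polytope

section Hinges

variable {m : ℕ} {Ω : ZMod m → Bool} {i : ZMod m}

theorem exists_isHinge (hΩ : ∃ i j, Ω i ≠ Ω j) : ∃ i, IsHinge Ω i := by
  contrapose! hΩ
  have periodic : Function.Periodic Ω 1 := fun i ↦ by
    simpa [IsHinge] using (not_not.1 (hΩ (i + 1))).symm
  have eq_zero (i : ZMod m) : Ω i = Ω 0 := by
    obtain ⟨n, rfl⟩ := ZMod.intCast_surjective i
    simpa only [mul_one] using periodic.int_mul_eq n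
  exact fun i j ↦ (eq_zero i).trans (eq_zero j).symm

theorem exists_isHinge_sub_natCast [NeZero m] (hΩ : ∃ i j, Ω i ≠ Ω j) (i : ZMod m) :
    ∃ n : ℕ, IsHinge Ω (i - n) := by
  obtain ⟨j, hj⟩ := exists_isHinge hΩ
  exact ⟨(i - j).val, by simpa only [ZMod.natCast_zmod_val, sub_sub_cancel] using hj⟩

/-- The number of steps back from layer `i` to the nearest hinge, `0` if `i` is itself a hinge.
The infimum in `ℕ` gives the junk value `0` when there is no hinge behind `i`. -/
noncomputable def hingeDist (Ω : ZMod m → Bool) (i : ZMod m) : ℕ :=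
  sInf {n : ℕ | IsHinge Ω (i - n)}

theorem isHinge_sub_hingeDist (hback : ∃ n : ℕ, IsHinge Ω (i - n)) :
    IsHinge Ω (i - hingeDist Ω i) :=
  Nat.sInf_mem hback

theorem hingeDist_eq_hingeDist_sub_one_add_one (hback : ∃ n : ℕ, IsHinge Ω (i - n))
    (hi : ¬IsHinge Ω i) : hingeDist Ω i = hingeDist Ω (i - 1) + 1 := by
  have hpos : 1 ≤ hingeDist Ω i := by
    refine Nat.pos_of_ne_zero fun h ↦ hi ?_
    simpa only [h, Nat.cast_zero, sub_zero] using isHinge_sub_hingeDist hback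
  have hshift (n : ℕ) : i - 1 - n = i - (n + 1 : ℕ) := by push_cast; ring
  simp only [hingeDist, hshift]
  exact (Nat.sInf_add hpos).symm

theorem hingeDist_add_one_le (hback : ∃ n : ℕ, IsHinge Ω (i - n)) :
    hingeDist Ω (i + 1) ≤ hingeDist Ω i + 1 :=
  Nat.sInf_le (by simpa using isHinge_sub_hingeDist hback)

end Hinges

section AngleProfile

/-- A bounded, increasing and strictly concave sequence, giving the angle of a layer in terms of its
distance from the preceding hinge. -/
noncomputable def angleProfile (n : ℕ) : ℝ := 3 / 2 - (1 / 2) ^ (n + 1)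

theorem angleProfile_monotone : Monotone angleProfile := fun _ _ h ↦
  sub_le_sub_left (pow_le_pow_of_le_one (by norm_num) (by norm_num) (by lia)) _

theorem one_le_angleProfile (n : ℕ) : 1 ≤ angleProfile n :=
  calc (1 : ℝ) = angleProfile 0 := by norm_num [angleProfile]
    _ ≤ angleProfile n := angleProfile_monotone n.zero_le

theorem angleProfile_lt (n : ℕ) : angleProfile n < 3 / 2 :=
  sub_lt_self _ (by positivity)

theorem abs_angleProfile_sub_lt (k n : ℕ) : |angleProfile k - angleProfile n| < 1 / 2 := by
  rw [abs_sub_lt_iff]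
  constructor <;>
    linarith [one_le_angleProfile k, angleProfile_lt k, one_le_angleProfile n, angleProfile_lt n]

theorem angleProfile_add_lt (n : ℕ) :
    angleProfile n + angleProfile (n + 2) < 2 * angleProfile (n + 1) := by
  have hpos : (0 : ℝ) < (1 / 2) ^ n := by positivity
  simp only [angleProfile, pow_succ]
  linarith

end AngleProfile

theorem nonempty_Ppoly {m : ℕ} [NeZero m] {Ω : ZMod m → Bool} (hΩ : ∃ i j, Ω i ≠ Ω j) :
    (Ppoly m Ω).Nonempty := by
  have hback := exists_isHinge_sub_natCast hΩ
  refine ⟨fun i ↦ angleProfile (hingeDist Ω i), fun i ↦ ⟨?_, ?_⟩, fun i hi ↦ ?_, fun i _ ↦ ?_⟩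
  · exact one_pos.trans_le (one_le_angleProfile _)
  · linarith [angleProfile_lt (hingeDist Ω i), pi_gt_three]
  · have hprev := hingeDist_eq_hingeDist_sub_one_add_one (hback i) hi
    have hnext : hingeDist Ω (i + 1) ≤ hingeDist Ω (i - 1) + 2 :=
      (hingeDist_add_one_le (hback i)).trans_eq (by rw [hprev])
    simp only [hprev]
    exact (add_le_add_right (angleProfile_monotone hnext) _).trans_lt (angleProfile_add_lt _)
  · calc |angleProfile (hingeDist Ω (i + 1)) - angleProfile (hingeDist Ω (i - 1))|
        < 1 / 2 := abs_angleProfile_sub_lt _ _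
      _ ≤ 1 := by norm_num
      _ ≤ angleProfile (hingeDist Ω i) := one_le_angleProfile _

/-- For a nonconstant cyclic word `Ω`, the polytope `P` of angle structures is an open,
convex, bounded and nonempty subset of `ℝ^m`. -/
theorem Ppoly_isOpen_convex_bounded_nonempty (m : ℕ) [NeZero m] (Ω : ZMod m → Bool)
    (hΩ : ∃ i j, Ω i ≠ Ω j) :
    IsOpen (Ppoly m Ω) ∧ Convex ℝ (Ppoly m Ω) ∧
      Bornology.IsBounded (Ppoly m Ω) ∧ (Ppoly m Ω).Nonempty :=
  ⟨isOpen_Ppoly Ω, convex_Ppoly Ω, isBounded_Ppoly Ω, nonempty_Ppoly hΩ⟩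
end

section
/- Fix c ≥ 2 and a word ω : Fin c → Bool (the letters of an alternating two-bridge braid word), and call an interior index i ∈ {1, …, c−1} a hinge index iff ω(i−1) ≠ ω(i) (letters indexed from 0). Suppose there exists at least one hinge index. Then there exists w : Fin (c+1) → ℝ with w(0) = w(c) = π/2 such that for every interior index i ∈ {1, …, c−1}: (range) 0 < w(i) < π/2; (concavity) w(i−1) + w(i+1) < 2·w(i) if i is not a hinge index; (hinge) |w(i+1) − w(i−1)| < w(i) if i is a hinge index. -/
open Real

/-!
Dropping the concavity condition at a single hinge `h` makes room below the boundary value `θ`: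
let `t` be the tent function with `t 0 = t c = 0` and `t h = 1`, and put `w = θ (1 - t² / 4)`.
On each side of `h` the tent is affine and non-constant, so `w` is strictly concave there. Since
`w` only takes values in `[3θ/4, θ]`, its differences are too small to violate the hinge condition
at any index.
-/

section

variable {𝕜 : Type*} [Field 𝕜] [LinearOrder 𝕜] [IsStrictOrderedRing 𝕜]

theorem strictConvexOn_sq_affine {a : 𝕜} (ha : a ≠ 0) (b : 𝕜) :
    StrictConvexOn 𝕜 Set.univ fun x ↦ (a * x + b) ^ 2 := by
  refine ⟨convex_univ, fun x _ y _ hxy p q hp hq hpq ↦ ?_⟩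
  have gap_pos : 0 < p * q * (a * (x - y)) ^ 2 :=
    mul_pos (mul_pos hp hq) (sq_pos_of_ne_zero (mul_ne_zero ha (sub_ne_zero.2 hxy)))
  obtain rfl : q = 1 - p := eq_sub_of_add_eq' hpq
  simp only [smul_eq_mul]
  linear_combination gap_pos

theorem two_mul_lt_add_of_strictConvexOn {s : Set 𝕜} {f : 𝕜 → 𝕜} (hf : StrictConvexOn 𝕜 s f)
    {x d : 𝕜} (hd : d ≠ 0) (hsub : x - d ∈ s) (hadd : x + d ∈ s) :
    2 * f x < f (x - d) + f (x + d) := by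
  have hne : x - d ≠ x + d := fun h ↦ hd (by linarith)
  have midpoint_lt := hf.2 hsub hadd hne one_half_pos one_half_pos (add_halves 1)
  have midpoint_eq : (1 / 2 : 𝕜) • (x - d) + (1 / 2 : 𝕜) • (x + d) = x := by
    simp only [smul_eq_mul]
    ring
  rw [midpoint_eq, smul_eq_mul, smul_eq_mul] at midpoint_lt
  linarith

/-- The tent function on `[0, c]` with apex at `h`: it rises linearly from `0` at `0` to `1` at `h`
and falls linearly back to `0` at `c`. It is meaningful for `0 < h < c`; outside `[0, c]` it is
negative. -/
def tent (h c x : 𝕜) : 𝕜 := min (x / h) ((c - x) / (c - h))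

/-- The candidate for the half pleating angles as a function of a continuous index in `[0, c]`: the
boundary value `θ`, lowered by a quarter of the squared tent with apex at the hinge `h`. The factor
`1 / 4` could be any positive number below `1 / 2`. -/
def pleatingProfile (θ h c x : 𝕜) : 𝕜 := θ * (1 - tent h c x ^ 2 / 4)

variable {θ h c x y z : 𝕜}

theorem tent_of_le (h_pos : 0 < h) (h_lt : h < c) (hx : x ≤ h) : tent h c x = x / h := by
  refine min_eq_left (((div_le_one h_pos).2 hx).trans ?_)
  exact (one_le_div (sub_pos.2 h_lt)).2 (sub_le_sub_left hx c)

theorem tent_of_ge (h_pos : 0 < h) (h_lt : h < c) (hx : h ≤ x) :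
    tent h c x = (c - x) / (c - h) := by
  refine min_eq_right (le_trans ?_ ((one_le_div h_pos).2 hx))
  exact (div_le_one (sub_pos.2 h_lt)).2 (sub_le_sub_left hx c)

theorem tent_zero (h_pos : 0 < h) (h_lt : h < c) : tent h c 0 = 0 := by
  rw [tent_of_le h_pos h_lt h_pos.le, zero_div]

theorem tent_right (h_pos : 0 < h) (h_lt : h < c) : tent h c c = 0 := by
  rw [tent_of_ge h_pos h_lt h_lt.le, sub_self, zero_div]

theorem tent_pos (h_pos : 0 < h) (h_lt : h < c) (hx : x ∈ Set.Ioo 0 c) : 0 < tent h c x :=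
  lt_min (div_pos hx.1 h_pos) (div_pos (sub_pos.2 hx.2) (sub_pos.2 h_lt))

theorem tent_nonneg (h_pos : 0 < h) (h_lt : h < c) (hx : x ∈ Set.Icc 0 c) : 0 ≤ tent h c x :=
  le_min (div_nonneg hx.1 h_pos.le) (div_nonneg (sub_nonneg.2 hx.2) (sub_pos.2 h_lt).le)

theorem tent_le_one (h_pos : 0 < h) (h_lt : h < c) : tent h c x ≤ 1 := by
  rcases le_total x h with hx | hx
  · exact (min_le_left _ _).trans ((div_le_one h_pos).2 hx)
  · exact (min_le_right _ _).trans ((div_le_one (sub_pos.2 h_lt)).2 (sub_le_sub_left hx c))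

theorem strictConvexOn_sq_tent_left (h_pos : 0 < h) (h_lt : h < c) :
    StrictConvexOn 𝕜 (Set.Icc 0 h) fun x ↦ tent h c x ^ 2 := by
  refine ((strictConvexOn_sq_affine (inv_ne_zero h_pos.ne') 0).subset (Set.subset_univ _)
    (convex_Icc 0 h)).congr fun x hx ↦ ?_
  dsimp only
  rw [tent_of_le h_pos h_lt hx.2]
  ring

theorem strictConvexOn_sq_tent_right (h_pos : 0 < h) (h_lt : h < c) :
    StrictConvexOn 𝕜 (Set.Icc h c) fun x ↦ tent h c x ^ 2 := by
  have slope_ne_zero : -(c - h)⁻¹ ≠ 0 := neg_ne_zero.2 (inv_ne_zero (sub_pos.2 h_lt).ne')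
  refine ((strictConvexOn_sq_affine slope_ne_zero (c / (c - h))).subset (Set.subset_univ _)
    (convex_Icc h c)).congr fun x hx ↦ ?_
  dsimp only
  rw [tent_of_ge h_pos h_lt hx.1]
  ring

theorem pleatingProfile_zero (h_pos : 0 < h) (h_lt : h < c) : pleatingProfile θ h c 0 = θ := by
  simp [pleatingProfile, tent_zero h_pos h_lt]

theorem pleatingProfile_right (h_pos : 0 < h) (h_lt : h < c) : pleatingProfile θ h c c = θ := by
  simp [pleatingProfile, tent_right h_pos h_lt]

theorem pleatingProfile_lt (hθ : 0 < θ) (h_pos : 0 < h) (h_lt : h < c) (hx : x ∈ Set.Ioo 0 c) :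
    pleatingProfile θ h c x < θ := by
  have tent_sq_pos : 0 < tent h c x ^ 2 := pow_pos (tent_pos h_pos h_lt hx) 2
  exact mul_lt_of_lt_one_right hθ (by linarith)

theorem pleatingProfile_mem_Icc (hθ : 0 ≤ θ) (h_pos : 0 < h) (h_lt : h < c)
    (hx : x ∈ Set.Icc 0 c) : pleatingProfile θ h c x ∈ Set.Icc (3 / 4 * θ) θ := by
  have tent_sq_le_one : tent h c x ^ 2 ≤ 1 :=
    pow_le_one₀ (tent_nonneg h_pos h_lt hx) (tent_le_one h_pos h_lt)
  have tent_sq_nonneg : 0 ≤ tent h c x ^ 2 := sq_nonneg _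
  rw [pleatingProfile, mul_comm (3 / 4)]
  exact ⟨mul_le_mul_of_nonneg_left (by linarith) hθ, mul_le_of_le_one_right hθ (by linarith)⟩

theorem pleatingProfile_pos (hθ : 0 < θ) (h_pos : 0 < h) (h_lt : h < c)
    (hx : x ∈ Set.Icc 0 c) : 0 < pleatingProfile θ h c x :=
  (mul_pos (by norm_num) hθ).trans_le (pleatingProfile_mem_Icc hθ.le h_pos h_lt hx).1

theorem abs_pleatingProfile_sub_lt (hθ : 0 < θ) (h_pos : 0 < h) (h_lt : h < c)
    (hx : x ∈ Set.Icc 0 c) (hy : y ∈ Set.Icc 0 c) (hz : z ∈ Set.Icc 0 c) :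
    |pleatingProfile θ h c x - pleatingProfile θ h c y| < pleatingProfile θ h c z := by
  obtain ⟨le_x, x_le⟩ := pleatingProfile_mem_Icc hθ.le h_pos h_lt hx
  obtain ⟨le_y, y_le⟩ := pleatingProfile_mem_Icc hθ.le h_pos h_lt hy
  obtain ⟨le_z, -⟩ := pleatingProfile_mem_Icc hθ.le h_pos h_lt hz
  rw [abs_lt]
  constructor <;> linarith

theorem pleatingProfile_add_lt_two_mul (hθ : 0 < θ) (h_pos : 0 < h) (h_lt : h < c) {d : 𝕜}
    (hd : 0 < d) (hsub : 0 ≤ x - d) (hadd : x + d ≤ c) (hside : x + d ≤ h ∨ h ≤ x - d) :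
    pleatingProfile θ h c (x - d) + pleatingProfile θ h c (x + d) <
      2 * pleatingProfile θ h c x := by
  have sq_tent_lt : 2 * tent h c x ^ 2 < tent h c (x - d) ^ 2 + tent h c (x + d) ^ 2 := by
    rcases hside with hle | hge
    · exact two_mul_lt_add_of_strictConvexOn (strictConvexOn_sq_tent_left h_pos h_lt) hd.ne'
        ⟨hsub, by linarith⟩ ⟨by linarith, hle⟩
    · exact two_mul_lt_add_of_strictConvexOn (strictConvexOn_sq_tent_right h_pos h_lt) hd.ne'
        ⟨hge, by linarith⟩ ⟨by linarith, hadd⟩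
  simp only [pleatingProfile]
  linear_combination θ / 4 * sq_tent_lt

theorem two_bridge_angle_structure_exists_general (hθ : 0 < θ) {c h : ℕ} (h_pos : 0 < h)
    (h_lt : h < c) :
    ∃ w : ℕ → 𝕜, w 0 = θ ∧ w c = θ ∧
      ∀ i, 0 < i → i < c →
        (0 < w i ∧ w i < θ) ∧
        (i ≠ h → w (i - 1) + w (i + 1) < 2 * w i) ∧
        |w (i + 1) - w (i - 1)| < w i := by
  have cast_h_pos : (0 : 𝕜) < h := Nat.cast_pos.2 h_pos
  have cast_h_lt : (h : 𝕜) < c := Nat.cast_lt.2 h_lt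
  have cast_mem {j : ℕ} (hj : j ≤ c) : (j : 𝕜) ∈ Set.Icc 0 (c : 𝕜) :=
    ⟨j.cast_nonneg, Nat.cast_le.2 hj⟩
  refine ⟨fun i ↦ pleatingProfile θ h c i, ?_, pleatingProfile_right cast_h_pos cast_h_lt,
    fun i i_pos i_lt ↦ ⟨⟨?_, ?_⟩, fun i_ne_h ↦ ?_, ?_⟩⟩
  · simpa only [Nat.cast_zero] using pleatingProfile_zero cast_h_pos cast_h_lt
  · exact pleatingProfile_pos hθ cast_h_pos cast_h_lt (cast_mem i_lt.le)
  · exact pleatingProfile_lt hθ cast_h_pos cast_h_lt ⟨Nat.cast_pos.2 i_pos, Nat.cast_lt.2 i_lt⟩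
  · have hside : i + 1 ≤ h ∨ h ≤ i - 1 := by omega
    have concave := pleatingProfile_add_lt_two_mul (x := (i : 𝕜)) hθ cast_h_pos cast_h_lt one_pos
    rw [← Nat.cast_pred i_pos, ← Nat.cast_succ] at concave
    exact concave (Nat.cast_nonneg _) (Nat.cast_le.2 i_lt)
      (hside.imp Nat.cast_le.2 Nat.cast_le.2)
  · exact abs_pleatingProfile_sub_lt hθ cast_h_pos cast_h_lt (cast_mem i_lt)
      (cast_mem (by omega)) (cast_mem i_lt.le)

end

/-- Nonemptiness of the space of angle structures for the monodromy triangulation of a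
two-bridge link complement: given a braid word `ω` of length `c ≥ 2` with at least one
hinge, there are parameters `w(0), …, w(c)` with boundary values `π/2` satisfying the
range, concavity and hinge conditions at all interior indices. -/
theorem two_bridge_angle_structure_exists (c : ℕ) (hc : 2 ≤ c) (ω : Fin c → Bool)
    (hhinge : ∃ i : ℕ, ∃ h1 : 1 ≤ i, ∃ h2 : i ≤ c - 1,
      ω ⟨i - 1, by omega⟩ ≠ ω ⟨i, by omega⟩) :
    ∃ w : Fin (c + 1) → ℝ,
      w ⟨0, by omega⟩ = π / 2 ∧ w ⟨c, by omega⟩ = π / 2 ∧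
      ∀ i : ℕ, ∀ h1 : 1 ≤ i, ∀ h2 : i ≤ c - 1,
        (0 < w ⟨i, by omega⟩ ∧ w ⟨i, by omega⟩ < π / 2) ∧
        (ω ⟨i - 1, by omega⟩ = ω ⟨i, by omega⟩ →
          w ⟨i - 1, by omega⟩ + w ⟨i + 1, by omega⟩ < 2 * w ⟨i, by omega⟩) ∧
        (ω ⟨i - 1, by omega⟩ ≠ ω ⟨i, by omega⟩ →
          |w ⟨i + 1, by omega⟩ - w ⟨i - 1, by omega⟩| < w ⟨i, by omega⟩) := by
  obtain ⟨h, one_le_h, h_le, hω⟩ := hhinge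
  obtain ⟨w, w_zero, w_c, hw⟩ := two_bridge_angle_structure_exists_general
    (div_pos pi_pos two_pos) (Nat.lt_of_succ_le one_le_h) (show h < c by omega)
  refine ⟨fun i ↦ w i, w_zero, w_c, fun i one_le_i i_le ↦ ?_⟩
  obtain ⟨range, concave, hinge⟩ := hw i one_le_i (by omega)
  exact ⟨range, fun hi ↦ concave (by rintro rfl; exact hω hi), fun _ ↦ hinge⟩
end
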